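/- Assume Case 3. (i) If (A8)⁺ holds, then for every η ∈ (0,η₀] the functions α_η⁺(s) and β_η⁺(s) converge to 1 as s → ∞. (ii) If (A8)⁻ holds, then for every η ∈ (0,η₀] the functions α_η⁻(s) and β_η⁻(s) converge to 1 as s → ∞. -/

import Mathlib

open MeasureTheory Filter Topology Set

noncomputable section

/-- Euclidean space `ℝ^n`; the torus `𝕋^n` is modelled by `ℤ^n`-periodic functions on it. -/
abbrev En (n : ℕ) : Type := EuclideanSpace ℝ (Fin n)

/-- The integer vector `k ∈ ℤ^n` viewed as an element of `ℝ^n`. -/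
def intVec (n : ℕ) (k : Fin n → ℤ) : En n := WithLp.toLp 2 (fun i => (k i : ℝ))

/-- A `ℤ^n`-periodic function on `ℝ^n`, i.e. a function on the torus `𝕋^n`. -/
def ZPeriodic {n : ℕ} (f : En n → ℝ) : Prop :=
  ∀ (x : En n) (k : Fin n → ℤ), f (x + intVec n k) = f x

/-- A Hamiltonian `H : 𝕋^n × ℝ^n → ℝ` (periodic in the first variable). -/
def ZPeriodicH {n : ℕ} (H : En n → En n → ℝ) : Prop :=
  ∀ (x : En n) (k : Fin n → ℤ) (p : En n), H (x + intVec n k) p = H x p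

/-- A function on `𝕋^n × ℝ` (space-time, periodic in space). -/
def ZPeriodicST {n : ℕ} (u : En n × ℝ → ℝ) : Prop :=
  ∀ (x : En n) (k : Fin n → ℤ) (t : ℝ), u (x + intVec n k, t) = u (x, t)

/-- (A1): coercivity, `lim_{r→∞} inf{H(x,p) : x ∈ 𝕋^n, |p| ≥ r} = ∞`. -/
def Coercive {n : ℕ} (H : En n → En n → ℝ) : Prop :=
  ∀ M : ℝ, ∃ r : ℝ, ∀ (x p : En n), r ≤ ‖p‖ → M ≤ H x p

/-- Coercivity for an `x`-independent Hamiltonian. -/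
def CoerciveP {n : ℕ} (H : En n → ℝ) : Prop :=
  ∀ M : ℝ, ∃ r : ℝ, ∀ p : En n, r ≤ ‖p‖ → M ≤ H p

/-- Lipschitz continuity (membership in `W^{1,∞}`). -/
def IsLip {n : ℕ} (f : En n → ℝ) : Prop := ∃ K : NNReal, LipschitzWith K f

/-- Viscosity subsolution inequality for one stationary equation
`H(x, Dw) + c (w - wo) ≤ ρ(x)` of a weakly coupled system. -/
def StatSubIneq {n : ℕ} (H : En n → En n → ℝ) (c : ℝ) (w wo : En n → ℝ) (ρ : En n → ℝ) : Prop :=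
  ∀ φ : En n → ℝ, ContDiff ℝ 1 φ →
    ∀ x₀ : En n, IsLocalMax (fun x => w x - φ x) x₀ →
      H x₀ (gradient φ x₀) + c * (w x₀ - wo x₀) ≤ ρ x₀

/-- Viscosity supersolution inequality for one stationary equation. -/
def StatSuperIneq {n : ℕ} (H : En n → En n → ℝ) (c : ℝ) (w wo : En n → ℝ) (ρ : En n → ℝ) : Prop :=
  ∀ φ : En n → ℝ, ContDiff ℝ 1 φ →
    ∀ x₀ : En n, IsLocalMin (fun x => w x - φ x) x₀ →
      ρ x₀ ≤ H x₀ (gradient φ x₀) + c * (w x₀ - wo x₀)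

/-- Viscosity subsolution of the stationary system
`Hᵢ(x, Dwᵢ) + cᵢ (wᵢ - wⱼ) = ρᵢ(x)`, `i = 1,2`. -/
def CellSub {n : ℕ} (H₁ H₂ : En n → En n → ℝ) (c₁ c₂ : ℝ) (w₁ w₂ : En n → ℝ)
    (ρ₁ ρ₂ : En n → ℝ) : Prop :=
  StatSubIneq H₁ c₁ w₁ w₂ ρ₁ ∧ StatSubIneq H₂ c₂ w₂ w₁ ρ₂

/-- Viscosity supersolution of the stationary system. -/
def CellSuper {n : ℕ} (H₁ H₂ : En n → En n → ℝ) (c₁ c₂ : ℝ) (w₁ w₂ : En n → ℝ)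
    (ρ₁ ρ₂ : En n → ℝ) : Prop :=
  StatSuperIneq H₁ c₁ w₁ w₂ ρ₁ ∧ StatSuperIneq H₂ c₂ w₂ w₁ ρ₂

/-- Viscosity solution (continuous, sub- and supersolution) of the stationary system. -/
def CellSolution {n : ℕ} (H₁ H₂ : En n → En n → ℝ) (c₁ c₂ : ℝ) (v₁ v₂ : En n → ℝ)
    (ρ₁ ρ₂ : En n → ℝ) : Prop :=
  Continuous v₁ ∧ Continuous v₂ ∧
    CellSub H₁ H₂ c₁ c₂ v₁ v₂ ρ₁ ρ₂ ∧ CellSuper H₁ H₂ c₁ c₂ v₁ v₂ ρ₁ ρ₂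

/-- Subsolution of the ergodic problem (E) with constant `c` (coupling constants 1). -/
def ErgSub {n : ℕ} (H₁ H₂ : En n → En n → ℝ) (v₁ v₂ : En n → ℝ) (c : ℝ) : Prop :=
  CellSub H₁ H₂ 1 1 v₁ v₂ (fun _ => c) (fun _ => c)

/-- Supersolution of the ergodic problem (E). -/
def ErgSuper {n : ℕ} (H₁ H₂ : En n → En n → ℝ) (v₁ v₂ : En n → ℝ) (c : ℝ) : Prop :=
  CellSuper H₁ H₂ 1 1 v₁ v₂ (fun _ => c) (fun _ => c)

/-- Viscosity solution of the ergodic problem (E):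
`H₁(x,Dv₁) + v₁ - v₂ = c`, `H₂(x,Dv₂) + v₂ - v₁ = c` on `𝕋^n`. -/
def ErgSolution {n : ℕ} (H₁ H₂ : En n → En n → ℝ) (v₁ v₂ : En n → ℝ) (c : ℝ) : Prop :=
  CellSolution H₁ H₂ 1 1 v₁ v₂ (fun _ => c) (fun _ => c)

/-- Viscosity subsolution inequality for one evolution equation
`∂ₜ u + H(x, Du) + u - uo ≤ 0` in `𝕋^n × (0,∞)`. -/
def EvolSubIneq {n : ℕ} (H : En n → En n → ℝ) (u uo : En n × ℝ → ℝ) : Prop :=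
  ∀ φ : En n × ℝ → ℝ, ContDiff ℝ 1 φ →
    ∀ (x₀ : En n) (t₀ : ℝ), 0 < t₀ →
      IsLocalMax (fun q => u q - φ q) (x₀, t₀) →
      fderiv ℝ φ (x₀, t₀) (0, 1) + H x₀ (gradient (fun y => φ (y, t₀)) x₀)
        + u (x₀, t₀) - uo (x₀, t₀) ≤ 0

/-- Viscosity supersolution inequality for one evolution equation. -/
def EvolSuperIneq {n : ℕ} (H : En n → En n → ℝ) (u uo : En n × ℝ → ℝ) : Prop :=
  ∀ φ : En n × ℝ → ℝ, ContDiff ℝ 1 φ →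
    ∀ (x₀ : En n) (t₀ : ℝ), 0 < t₀ →
      IsLocalMin (fun q => u q - φ q) (x₀, t₀) →
      0 ≤ fderiv ℝ φ (x₀, t₀) (0, 1) + H x₀ (gradient (fun y => φ (y, t₀)) x₀)
        + u (x₀, t₀) - uo (x₀, t₀)

/-- Viscosity subsolution of system (C) (with coupling constants `c₁ = c₂ = 1`). -/
def SysSub {n : ℕ} (H₁ H₂ : En n → En n → ℝ) (u₁ u₂ : En n × ℝ → ℝ) : Prop :=
  EvolSubIneq H₁ u₁ u₂ ∧ EvolSubIneq H₂ u₂ u₁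

/-- Viscosity supersolution of system (C). -/
def SysSuper {n : ℕ} (H₁ H₂ : En n → En n → ℝ) (u₁ u₂ : En n × ℝ → ℝ) : Prop :=
  EvolSuperIneq H₁ u₁ u₂ ∧ EvolSuperIneq H₂ u₂ u₁

/-- Viscosity solution of the Cauchy problem (C): continuous on `𝕋^n × [0,∞)`,
sub- and supersolution, attaining the initial data. -/
def SysSolution {n : ℕ} (H₁ H₂ : En n → En n → ℝ) (u₀₁ u₀₂ : En n → ℝ)
    (u₁ u₂ : En n × ℝ → ℝ) : Prop :=
  ContinuousOn u₁ {q : En n × ℝ | 0 ≤ q.2} ∧ ContinuousOn u₂ {q : En n × ℝ | 0 ≤ q.2} ∧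
    SysSub H₁ H₂ u₁ u₂ ∧ SysSuper H₁ H₂ u₁ u₂ ∧
    (∀ x, u₁ (x, 0) = u₀₁ x) ∧ (∀ x, u₂ (x, 0) = u₀₂ x)

/-- Viscosity subsolution of the single stationary equation `H(x,Dv) ≤ c` on `𝕋^n`. -/
def SingleSub {n : ℕ} (H : En n → En n → ℝ) (v : En n → ℝ) (c : ℝ) : Prop :=
  ∀ φ : En n → ℝ, ContDiff ℝ 1 φ →
    ∀ x₀ : En n, IsLocalMax (fun x => v x - φ x) x₀ → H x₀ (gradient φ x₀) ≤ c

/-- Viscosity supersolution of the single stationary equation `H(x,Dv) ≥ c` on `𝕋^n`. -/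
def SingleSuper {n : ℕ} (H : En n → En n → ℝ) (v : En n → ℝ) (c : ℝ) : Prop :=
  ∀ φ : En n → ℝ, ContDiff ℝ 1 φ →
    ∀ x₀ : En n, IsLocalMin (fun x => v x - φ x) x₀ → c ≤ H x₀ (gradient φ x₀)

/-- Viscosity solution of the single stationary equation `H(x,Dv) = c` on `𝕋^n`. -/
def SingleSolution {n : ℕ} (H : En n → En n → ℝ) (v : En n → ℝ) (c : ℝ) : Prop :=
  Continuous v ∧ SingleSub H v c ∧ SingleSuper H v c

/-- Uniform convergence `u(·,t) → v` on `𝕋^n` as `t → ∞`. -/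
def UnifTendsTo {n : ℕ} (u : En n × ℝ → ℝ) (v : En n → ℝ) : Prop :=
  ∀ ε : ℝ, 0 < ε → ∃ T : ℝ, ∀ t : ℝ, T ≤ t → ∀ x : En n, |u (x, t) - v x| ≤ ε

/-- (A8)⁺ at level `η` with constant `ψ`. -/
def A8plusAt {n : ℕ} (H : En n → En n → ℝ) (η ψ : ℝ) : Prop :=
  ∀ (x p q : En n), η ≤ H x (p + q) → H x q ≤ 0 →
    ∀ μ : ℝ, 0 < μ → μ ≤ 1 → H x (p + q) + ψ * (1 - μ) ≤ μ * H x (μ⁻¹ • p + q)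

/-- (A8)⁻ at level `η` with constant `ψ`. -/
def A8minusAt {n : ℕ} (H : En n → En n → ℝ) (η ψ : ℝ) : Prop :=
  ∀ (x p q : En n), H x (p + q) ≤ -η → 0 ≤ H x q →
    ∀ μ : ℝ, 1 ≤ μ → μ * H x (μ⁻¹ • p + q) ≤ H x (p + q) - ψ * (μ - 1) / μ

/-- (A8)⁺ with threshold `η₀`. -/
def A8plus {n : ℕ} (H : En n → En n → ℝ) (η₀ : ℝ) : Prop :=
  ∀ η : ℝ, 0 < η → η ≤ η₀ → ∃ ψ : ℝ, 0 < ψ ∧ A8plusAt H η ψ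

/-- (A8)⁻ with threshold `η₀`. -/
def A8minus {n : ℕ} (H : En n → En n → ℝ) (η₀ : ℝ) : Prop :=
  ∀ η : ℝ, 0 < η → η ≤ η₀ → ∃ ψ : ℝ, 0 < ψ ∧ A8minusAt H η ψ

/-- The function `F` of the Key Lemma: `F(r) = C r` for `r ≥ 0`, `F(r) = r / C` for `r < 0`. -/
def Fc (C r : ℝ) : ℝ := if 0 ≤ r then C * r else r / C

/-- `α_η⁺(s)` (resp. `β_η⁺(s)` with `u = u₂`):
`min_{x ∈ 𝕋^n, t ≥ s} (u(x,t) - v(x) + η (t-s)) / (u(x,s) - v(x))`. -/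
def alphaPlus {n : ℕ} (u : En n × ℝ → ℝ) (v : En n → ℝ) (η s : ℝ) : ℝ :=
  sInf {r : ℝ | ∃ (x : En n) (t : ℝ), s ≤ t ∧
    r = (u (x, t) - v x + η * (t - s)) / (u (x, s) - v x)}

/-- `α_η⁻(s)` (resp. `β_η⁻(s)` with `u = u₂`):
`max_{x ∈ 𝕋^n, t ≥ s} (u(x,t) - v(x) - η (t-s)) / (u(x,s) - v(x))`. -/
def alphaMinus {n : ℕ} (u : En n × ℝ → ℝ) (v : En n → ℝ) (η s : ℝ) : ℝ :=
  sSup {r : ℝ | ∃ (x : En n) (t : ℝ), s ≤ t ∧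
    r = (u (x, t) - v x - η * (t - s)) / (u (x, s) - v x)}

/-- (A9)⁺. -/
def A9plus {n : ℕ} (H : En n → En n → ℝ) : Prop :=
  ∃ K : Set (En n), IsClosed K ∧ (∀ x ∈ K, ∀ k : Fin n → ℤ, x + intVec n k ∈ K) ∧
    (∀ x ∈ K, (∀ p : En n, 0 ≤ H x p) ∧ ∃ p : En n, H x p = 0) ∧
    (∀ ε : ℝ, 0 < ε → ∃ η₀ : ℝ, 0 < η₀ ∧ ∃ ψ : ℝ → ℝ, (∀ r : ℝ, 0 < r → 0 < ψ r) ∧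
      ∀ η : ℝ, 0 < η → η ≤ η₀ → ∀ (x p q : En n), ε ≤ Metric.infDist x K →
        η ≤ H x (p + q) → H x q ≤ 0 →
        ∀ μ : ℝ, 0 < μ → μ ≤ 1 → H x (p + q) + ψ η * (1 - μ) ≤ μ * H x (μ⁻¹ • p + q))

/-- (A9)⁻. -/
def A9minus {n : ℕ} (H : En n → En n → ℝ) : Prop :=
  ∃ K : Set (En n), IsClosed K ∧ (∀ x ∈ K, ∀ k : Fin n → ℤ, x + intVec n k ∈ K) ∧
    (∀ x ∈ K, (∀ p : En n, 0 ≤ H x p) ∧ ∃ p : En n, H x p = 0) ∧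
    (∀ ε : ℝ, 0 < ε → ∃ η₀ : ℝ, 0 < η₀ ∧ ∃ ψ : ℝ → ℝ, (∀ r : ℝ, 0 < r → 0 < ψ r) ∧
      ∀ η : ℝ, 0 < η → η ≤ η₀ → ∀ (x p q : En n), ε ≤ Metric.infDist x K →
        H x (p + q) ≤ -η → 0 ≤ H x q →
        ∀ μ : ℝ, 1 ≤ μ → μ * H x (μ⁻¹ • p + q) ≤ H x (p + q) - ψ η * (μ - 1) / μ)

/-- (A6): uniform convexity of an `x`-independent Hamiltonian. -/
def UnifConvex {n : ℕ} (H : En n → ℝ) : Prop :=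
  ∃ α : ℝ, 0 < α ∧ ∀ᵐ q : En n ∂volume, DifferentiableAt ℝ H q ∧
    ∀ p : En n, H q + fderiv ℝ H q (p - q) + α * ‖p - q‖ ^ 2 ≤ H p

end

/-!
The difference `u₁ - u₂` decays like `exp (-2 * t)`, by doubling the variables in the equations for
`u₁` and `u₂`; afterwards each `u = uᵢ` solves a single equation up to an exponentially small error.

(i) For `G` decreasing exponentially slowly to `1`, the inequality
`u (x, s) - v x ≤ G s * (u (x, t) - v x + η * (t - s))` holds for all `t ≥ s ≥ s₀`. At a negative
minimum of the gap, tripling the variables (the space variables of `u (·, t)`, `u (·, s)` and `v`)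
compares `H` at the three gradients, and the gain `ψ * (1 - μ)` in (A8)⁺ with `μ = (G s)⁻¹` beats
both the decrease of `G` and the coupling error.

(ii) Letting `μ → ∞` in (A8)⁻ and using coercivity gives `0 ≤ H`. Hence each `u (x, ·)` is
nonincreasing up to the exponentially small coupling term.
-/

section Penalization

theorem eq_zero_and_le_of_mapClusterPt_penalized {X : Type*} [TopologicalSpace X] {f g : X → ℝ}
    (hf : Continuous f) (hg : Continuous g) (hg₀ : ∀ q, 0 ≤ g q) {c : ℝ} {p : ℕ → X}
    (hp : ∀ m : ℕ, f (p m) + m * g (p m) ≤ c) {l : X} (hl : MapClusterPt l atTop p) :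
    g l = 0 ∧ f l ≤ c := by
  have bound (M : ℕ) : f l + M * g l ≤ c := by
    have hclosed : IsClosed {q | f q + M * g q ≤ c} := isClosed_le (by fun_prop) continuous_const
    refine hclosed.mem_of_mapClusterPt hl ?_
    filter_upwards [eventually_ge_atTop M] with m hm
    have : (M : ℝ) * g (p m) ≤ m * g (p m) := by gcongr; exact hg₀ _
    exact (by gcongr : f (p m) + M * g (p m) ≤ f (p m) + m * g (p m)).trans (hp m)
  refine ⟨(hg₀ l).antisymm' (not_lt.1 fun hpos => ?_), by simpa using bound 0⟩
  obtain ⟨M, hM⟩ := exists_nat_gt ((c - f l) / g l)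
  linarith [bound M, (div_lt_iff₀ hpos).1 hM]

theorem exists_tendsto_isLocalMin_penalized {X : Type*} [MetricSpace X] [ProperSpace X]
    {f g : X → ℝ} (hf : Continuous f) (hg : Continuous g) (hg₀ : ∀ q, 0 ≤ g q) {l : X}
    (hl : g l = 0) (hstrict : ∀ᶠ q in 𝓝 l, g q = 0 → f q ≤ f l → q = l) :
    ∃ p : ℕ → X, Tendsto p atTop (𝓝 l) ∧
      ∀ᶠ m : ℕ in atTop, IsLocalMin (fun q => f q + m * g q) (p m) := by
  obtain ⟨r, hr, hstrict⟩ := Metric.nhds_basis_closedBall.eventually_iff.1 hstrict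
  have hcpt : IsCompact (Metric.closedBall l r) := isCompact_closedBall l r
  have hlr : l ∈ Metric.closedBall l r := Metric.mem_closedBall_self hr.le
  have hex (m : ℕ) : ∃ q ∈ Metric.closedBall l r,
      IsMinOn (fun q => f q + m * g q) (Metric.closedBall l r) q :=
    hcpt.exists_isMinOn ⟨l, hlr⟩ (by fun_prop)
  choose p hp_mem hp_min using hex
  have hp_le (m : ℕ) : f (p m) + m * g (p m) ≤ f l := by simpa [hl] using hp_min m hlr
  have hp_tendsto : Tendsto p atTop (𝓝 l) :=
    hcpt.tendsto_nhds_of_unique_mapClusterPt (.of_forall hp_mem) fun q hq hcluster =>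
      have ⟨hgq, hfq⟩ := eq_zero_and_le_of_mapClusterPt_penalized hf hg hg₀ hp_le hcluster
      hstrict hq hgq hfq
  refine ⟨p, hp_tendsto, ?_⟩
  filter_upwards [hp_tendsto (Metric.ball_mem_nhds l hr)] with m hm
  exact (hp_min m).isLocalMin (mem_of_superset (Metric.isOpen_ball.mem_nhds hm)
    Metric.ball_subset_closedBall)

theorem exists_mem_of_tendsto_of_isCompact {ι X Y : Type*} [TopologicalSpace X]
    [TopologicalSpace Y] {F : Filter ι} [F.NeBot] {p : ι → X} {l : X} (hp : Tendsto p F (𝓝 l))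
    {S : Set (X × Y)} (hS : IsClosed S) {K : Set Y} (hK : IsCompact K)
    (hmem : ∀ᶠ i in F, ∃ y ∈ K, (p i, y) ∈ S) : ∃ y ∈ K, (l, y) ∈ S := by
  by_contra! hl
  obtain ⟨U, V, hU, -, hlU, hKV, hUV⟩ := generalized_tube_lemma isCompact_singleton hK
    hS.isOpen_compl (by rintro ⟨x, y⟩ ⟨rfl, hy⟩; exact hl y hy)
  obtain ⟨i, hiU, y, hyK, hyS⟩ :=
    ((hp.eventually_mem (hU.mem_nhds (hlU rfl))).and hmem).exists
  exact hUV (mk_mem_prod hiU (hKV hyK)) hyS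

end Penalization

section Periodic

variable {n : ℕ}

theorem exists_norm_add_intVec_le (x : En n) : ∃ k : Fin n → ℤ, ‖x + intVec n k‖ ≤ √n := by
  refine ⟨fun i => -⌊x i⌋, ?_⟩
  rw [EuclideanSpace.norm_eq]
  refine Real.sqrt_le_sqrt ?_
  have hcoord (i : Fin n) : ‖(x + intVec n fun i => -⌊x i⌋) i‖ ^ 2 ≤ 1 := by
    have hfract : (x + intVec n fun i => -⌊x i⌋) i = Int.fract (x i) := by
      simp [intVec, Int.fract, sub_eq_add_neg]
    rw [hfract, Real.norm_of_nonneg (Int.fract_nonneg _)]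
    exact pow_le_one₀ (Int.fract_nonneg _) (Int.fract_lt_one _).le
  simpa using Finset.sum_le_sum fun i (_ : i ∈ Finset.univ) => hcoord i

theorem exists_isMinOn_univ_prod_of_periodic {Y : Type*} [TopologicalSpace Y] {F : En n × Y → ℝ}
    (hF : Continuous F) (hper : ∀ x k y, F (x + intVec n k, y) = F (x, y)) {K : Set Y}
    (hK : IsCompact K) (hne : K.Nonempty) :
    ∃ p ∈ Metric.closedBall 0 √n ×ˢ K, IsMinOn F (univ ×ˢ K) p := by
  have hball : (Metric.closedBall (0 : En n) √n).Nonempty := ⟨0, by simp⟩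
  obtain ⟨p, hp, hmin⟩ := ((isCompact_closedBall (0 : En n) √n).prod hK).exists_isMinOn
    (hball.prod hne) hF.continuousOn
  refine ⟨p, hp, fun ⟨x, y⟩ hy => ?_⟩
  obtain ⟨k, hk⟩ := exists_norm_add_intVec_le x
  simpa only [mem_ofPred_eq, hper] using
    hmin (show (x + intVec n k, y) ∈ _ from ⟨by simpa using hk, hy.2⟩)

end Periodic

section TestFunctions

section Gradient

variable {E : Type*} [NormedAddCommGroup E] [InnerProductSpace ℝ E] {P Q : E → ℝ}
  {a b x : E}

theorem contDiff_mul_norm_sub_sq (c : ℝ) (d : E) {k : WithTop ℕ∞} :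
    ContDiff ℝ k fun y => c * ‖y - d‖ ^ 2 :=
  contDiff_const.mul ((contDiff_id.sub contDiff_const).norm_sq ℝ)

theorem fderiv_fst_add_snd_apply_zero_one {g : ℝ → ℝ} {t g' : ℝ} (hP : DifferentiableAt ℝ P x)
    (hg : HasDerivAt g g' t) :
    fderiv ℝ (fun q : E × ℝ => P q.1 + g q.2) (x, t) (0, 1) = g' := by
  have hP' : HasFDerivAt (fun q : E × ℝ => P q.1) _ (x, t) :=
    HasFDerivAt.comp (g := P) (x, t) hP.hasFDerivAt hasFDerivAt_fst
  have hgt : HasFDerivAt (fun q : E × ℝ => g q.2) _ (x, t) :=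
    HasFDerivAt.comp (g := g) (x, t) hg.hasFDerivAt hasFDerivAt_snd
  rw [(hP'.fun_add hgt).fderiv]
  simp

variable [CompleteSpace E]

theorem hasGradientAt_mul_norm_sub_sq (c : ℝ) (d x : E) :
    HasGradientAt (fun y => c * ‖y - d‖ ^ 2) ((2 * c) • (x - d)) x := by
  rw [hasGradientAt_iff_hasFDerivAt]
  refine (((hasFDerivAt_id x).sub_const d).norm_sq.const_mul c).congr_fderiv ?_
  ext y
  simp only [id_eq, map_smul, ContinuousLinearMap.comp_id, smul_apply,
    InnerProductSpace.toDual_apply_apply, innerSL_apply_apply, smul_eq_mul]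
  ring

theorem hasGradientAt_add (hP : HasGradientAt P a x) (hQ : HasGradientAt Q b x) :
    HasGradientAt (fun y => P y + Q y) (a + b) x := by
  rw [hasGradientAt_iff_hasFDerivAt] at hP hQ ⊢
  exact (hP.add hQ).congr_fderiv (map_add _ a b).symm

theorem hasGradientAt_const_mul (c : ℝ) (hP : HasGradientAt P a x) :
    HasGradientAt (fun y => c * P y) (c • a) x := by
  rw [hasGradientAt_iff_hasFDerivAt] at hP ⊢
  exact (hP.const_mul c).congr_fderiv (map_smul _ c a).symm

theorem gradient_add_const (c : ℝ) (hP : HasGradientAt P a x) :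
    gradient (fun y => P y + c) x = a :=
  (hasGradientAt_iff_hasFDerivAt.2 (hP.hasFDerivAt.add_const c)).gradient

end Gradient

theorem hasDerivAt_comp_mk_left {φ : ℝ × ℝ → ℝ} {t s : ℝ} (hφ : DifferentiableAt ℝ φ (t, s)) :
    HasDerivAt (fun s' => φ (t, s')) (fderiv ℝ φ (t, s) (0, 1)) s :=
  hφ.hasFDerivAt.comp_hasDerivAt s ((hasDerivAt_const s t).prodMk (hasDerivAt_id s))

theorem hasDerivAt_comp_mk_right {φ : ℝ × ℝ → ℝ} {t s : ℝ} (hφ : DifferentiableAt ℝ φ (t, s)) :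
    HasDerivAt (fun t' => φ (t', s)) (fderiv ℝ φ (t, s) (1, 0)) t :=
  hφ.hasFDerivAt.comp_hasDerivAt t ((hasDerivAt_id t).prodMk (hasDerivAt_const t s))

variable {n : ℕ} {H : En n → En n → ℝ} {u uo : En n × ℝ → ℝ} {P : En n → ℝ} {g : ℝ → ℝ}
  {x a : En n} {t b : ℝ}

theorem EvolSubIneq.nonpos_of_isLocalMin (hu : EvolSubIneq H u uo) (hP : ContDiff ℝ 1 P)
    (hg : ContDiff ℝ 1 g) (hPx : HasGradientAt P a x) (hgt : HasDerivAt g b t) (ht : 0 < t)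
    (hmin : IsLocalMin (fun q => P q.1 + g q.2 - u q) (x, t)) :
    b + H x a + u (x, t) - uo (x, t) ≤ 0 := by
  have hmax : IsLocalMax (fun q => u q - (P q.1 + g q.2)) (x, t) := by
    simpa only [neg_sub] using hmin.neg
  have h := hu _ ((hP.comp contDiff_fst).add (hg.comp contDiff_snd)) x t ht hmax
  simpa only [Function.comp_apply, gradient_add_const _ hPx,
    fderiv_fst_add_snd_apply_zero_one hPx.differentiableAt hgt] using h

theorem EvolSuperIneq.nonneg_of_isLocalMin (hu : EvolSuperIneq H u uo) {θ : ℝ} (hθ : 0 < θ)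
    (hP : ContDiff ℝ 1 P) (hg : ContDiff ℝ 1 g) (hPx : HasGradientAt P a x)
    (hgt : HasDerivAt g b t) (ht : 0 < t)
    (hmin : IsLocalMin (fun q => θ * u q + (P q.1 + g q.2)) (x, t)) :
    0 ≤ -θ⁻¹ * b + H x (-θ⁻¹ • a) + u (x, t) - uo (x, t) := by
  have hP' := hasGradientAt_const_mul (-θ⁻¹) hPx
  have hmin' : IsLocalMin (fun q => u q - (-θ⁻¹ * P q.1 + -θ⁻¹ * g q.2)) (x, t) := by
    filter_upwards [hmin] with q hq
    have := mul_le_mul_of_nonneg_left hq (inv_nonneg.2 hθ.le)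
    simp only [mul_add, inv_mul_cancel_left₀ hθ.ne'] at this
    linarith
  have h := hu _ ((contDiff_const.mul (hP.comp contDiff_fst)).add
    (contDiff_const.mul (hg.comp contDiff_snd))) x t ht hmin'
  have hgt' := hgt.const_mul (-θ⁻¹)
  simpa only [Function.comp_apply, gradient_add_const _ hP',
    fderiv_fst_add_snd_apply_zero_one hP'.differentiableAt hgt'] using h

theorem SingleSub.le_of_isLocalMin {v : En n → ℝ} {c : ℝ} (hv : SingleSub H v c) {ρ : ℝ}
    (hρ : 0 < ρ) (hP : ContDiff ℝ 1 P) (hPx : HasGradientAt P a x)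
    (hmin : IsLocalMin (fun y => P y - ρ * v y) x) : H x (ρ⁻¹ • a) ≤ c := by
  have hP' := hasGradientAt_const_mul ρ⁻¹ hPx
  have hmax : IsLocalMax (fun y => v y - ρ⁻¹ * P y) x := by
    filter_upwards [hmin] with y hy
    have := mul_le_mul_of_nonneg_left hy (inv_nonneg.2 hρ.le)
    simp only [mul_sub, inv_mul_cancel_left₀ hρ.ne'] at this
    linarith
  simpa only [hP'.gradient] using hv _ (contDiff_const.mul hP) x hmax

end TestFunctions

section Tripling

variable {n : ℕ}

theorem Coercive.exists_norm_le {H : En n → En n → ℝ} (hH : Coercive H) (M : ℝ) :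
    ∃ r, ∀ x p, H x p ≤ M → ‖p‖ ≤ r := by
  obtain ⟨r, hr⟩ := hH (M + 1)
  refine ⟨r, fun x p hp => ?_⟩
  by_contra! hlt
  linarith [hr x p hlt.le]

/-- The function minimised when the space variable of `θ(s) w(x,t) - u(x,s) - ρ(s) v(x) + φ(t,s)`
is tripled. The term `‖x - e‖²` makes a minimum over the diagonal at `x = e` strict. -/
noncomputable def tripled (θ ρ : ℝ → ℝ) (φ : ℝ × ℝ → ℝ) (w u : En n × ℝ → ℝ) (v : En n → ℝ)
    (e : En n) : En n × En n × En n × ℝ × ℝ → ℝ :=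
  fun (x, y, z, t, s) => θ s * w (x, t) - u (y, s) - ρ s * v z + φ (t, s) + ‖x - e‖ ^ 2

/-- The penalty that forces the three space variables of `tripled` together. -/
noncomputable def tripledGap : En n × En n × En n × ℝ × ℝ → ℝ :=
  fun (x, y, z, _, _) => ‖y - x‖ ^ 2 + ‖z - x‖ ^ 2

/-- The points `(x, y, z, t, s)` together with gradients `a` of `u` at `y` and `b` of `v` at `z`
that satisfy the three viscosity inequalities available at a local minimum of
`tripled + m * tripledGap`. -/
def tripledJets (H K : En n → En n → ℝ) (θ ρ : ℝ → ℝ) (φ : ℝ × ℝ → ℝ)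
    (w wo u uo : En n × ℝ → ℝ) (v : En n → ℝ) (e : En n) :
    Set ((En n × En n × En n × ℝ × ℝ) × En n × En n) :=
  {((x, y, z, t, s), (a, b)) |
    0 ≤ -(θ s)⁻¹ * fderiv ℝ φ (t, s) (1, 0)
      + H x ((θ s)⁻¹ • (a + ρ s • b - (2 : ℝ) • (x - e))) + w (x, t) - wo (x, t) ∧
    deriv θ s * w (x, t) - deriv ρ s * v z + fderiv ℝ φ (t, s) (0, 1) + H y a
      + u (y, s) - uo (y, s) ≤ 0 ∧
    K z b ≤ 0}

variable {H K : En n → En n → ℝ} {θ ρ : ℝ → ℝ} {φ : ℝ × ℝ → ℝ} {w wo u uo : En n × ℝ → ℝ}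
  {v : En n → ℝ} {e : En n}

theorem exists_mem_tripledJets (hw : EvolSuperIneq H w wo) (hu : EvolSubIneq H u uo)
    (hv : SingleSub K v 0) (hθ : ContDiff ℝ 1 θ) (hθ₀ : ∀ s, 0 < θ s) (hρ : ContDiff ℝ 1 ρ)
    (hρ₀ : ∀ s, 0 < ρ s) (hφ : ContDiff ℝ 1 φ) {m : ℝ} {x y z : En n} {t s : ℝ} (ht : 0 < t)
    (hs : 0 < s)
    (hmin : IsLocalMin (fun q => tripled θ ρ φ w u v e q + m * tripledGap q) (x, y, z, t, s)) :
    ∃ ab, ((x, y, z, t, s), ab) ∈ tripledJets H K θ ρ φ w wo u uo v e := by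
  have hφd : DifferentiableAt ℝ φ (t, s) := hφ.differentiable one_ne_zero _
  have hθs := (hθ.differentiable one_ne_zero s).hasDerivAt
  have hρs := (hρ.differentiable one_ne_zero s).hasDerivAt
  have hsq (c : ℝ) (d : En n) := contDiff_mul_norm_sub_sq c d (k := 1)
  have hgrad := hasGradientAt_mul_norm_sub_sq (E := En n)
  refine ⟨((2 * m) • (y - x), (ρ s)⁻¹ • (2 * m) • (z - x)), ?_, ?_, ?_⟩
  · have hgx := hasGradientAt_add (hasGradientAt_add (hgrad 1 e x) (hgrad m y x)) (hgrad m z x)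
    convert hw.nonneg_of_isLocalMin (hθ₀ s) (((hsq 1 e).add (hsq m y)).add (hsq m z))
      (g := fun t' => φ (t', s)) (by fun_prop) hgx (hasDerivAt_comp_mk_right hφd) ht ?_ using 5
    · rw [smul_inv_smul₀ (hρ₀ s).ne']
      module
    · filter_upwards [hmin.comp_continuous
        (g := fun q : En n × ℝ => (q.1, y, z, q.2, s)) (by fun_prop)] with q hq
      simp only [tripled, tripledGap, Function.comp_apply, norm_sub_rev _ q.1,
        norm_sub_rev _ x] at hq ⊢
      linarith
  · convert hu.nonpos_of_isLocalMin (hsq m x)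
      (g := fun s' => θ s' * w (x, t) - ρ s' * v z + φ (t, s')) (by fun_prop) (hgrad m x y)
      (((hθs.mul_const _).sub (hρs.mul_const _)).add (hasDerivAt_comp_mk_left hφd)) hs ?_ using 1
    filter_upwards [hmin.comp_continuous
        (g := fun q : En n × ℝ => (x, q.1, z, t, q.2)) (by fun_prop)] with q hq
    simp only [tripled, tripledGap, Function.comp_apply] at hq ⊢
    linarith
  · refine hv.le_of_isLocalMin (hρ₀ s) (hsq m x) (hgrad m x z) ?_
    filter_upwards [hmin.comp_continuous
        (g := fun z' : En n => (x, y, z', t, s)) (by fun_prop)] with q hq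
    simp only [tripled, tripledGap, Function.comp_apply] at hq ⊢
    linarith

theorem isClosed_tripledJets (hH : Continuous fun q : En n × En n => H q.1 q.2)
    (hK : Continuous fun q : En n × En n => K q.1 q.2) (hθ : ContDiff ℝ 1 θ)
    (hθ₀ : ∀ s, 0 < θ s) (hρ : ContDiff ℝ 1 ρ) (hφ : ContDiff ℝ 1 φ) (hw : Continuous w)
    (hwo : Continuous wo) (hu : Continuous u) (huo : Continuous uo) (hv : Continuous v) :
    IsClosed (tripledJets H K θ ρ φ w wo u uo v e) := by
  have := hθ.continuous_deriv_one
  have := hρ.continuous_deriv_one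
  have hφ' (d : ℝ × ℝ) : Continuous fun q => fderiv ℝ φ q d :=
    (hφ.continuous_fderiv one_ne_zero).clm_apply continuous_const
  have := hφ' (1, 0)
  have := hφ' (0, 1)
  have hne (s : ℝ) : θ s ≠ 0 := (hθ₀ s).ne'
  simp only [tripledJets, ofPred_and]
  refine (isClosed_le continuous_const ?_).inter
    ((isClosed_le ?_ continuous_const).inter (isClosed_le ?_ continuous_const))
  all_goals fun_prop (disch := simp [hne])

theorem exists_isCompact_tripledJets_fiber (hH : Coercive H) (hK : Coercive K)
    (hθ : ContDiff ℝ 1 θ) (hρ : ContDiff ℝ 1 ρ) (hφ : ContDiff ℝ 1 φ) (hw : Continuous w)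
    (hu : Continuous u) (huo : Continuous uo) (hv : Continuous v)
    (q₀ : En n × En n × En n × ℝ × ℝ) :
    ∃ B, IsCompact B ∧
      ∀ᶠ q in 𝓝 q₀, ∀ ab, (q, ab) ∈ tripledJets H K θ ρ φ w wo u uo v e → ab ∈ B := by
  have := hθ.continuous_deriv_one
  have := hρ.continuous_deriv_one
  have : Continuous fun q => fderiv ℝ φ q (0, 1) :=
    (hφ.continuous_fderiv one_ne_zero).clm_apply continuous_const
  let bound : En n × En n × En n × ℝ × ℝ → ℝ := fun (x, y, z, t, s) =>
    -(deriv θ s * w (x, t) - deriv ρ s * v z + fderiv ℝ φ (t, s) (0, 1) + u (y, s) - uo (y, s))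
  have hbound : Continuous bound := by fun_prop
  obtain ⟨r, hr⟩ := hH.exists_norm_le (bound q₀ + 1)
  obtain ⟨r', hr'⟩ := hK.exists_norm_le 0
  refine ⟨Metric.closedBall 0 r ×ˢ Metric.closedBall 0 r',
    (isCompact_closedBall 0 r).prod (isCompact_closedBall 0 r'), ?_⟩
  filter_upwards [hbound.continuousAt.eventually_le_const (lt_add_one _)]
  rintro ⟨x, y, z, t, s⟩ hq ⟨a, b⟩ ⟨-, ha, hb⟩
  refine ⟨mem_closedBall_zero_iff.2 (hr y a ?_), mem_closedBall_zero_iff.2 (hr' z b hb)⟩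
  simp only [bound] at hq ha ⊢
  linarith

theorem eventually_eq_of_tripled_le {x : En n} {t s : ℝ}
    (hmin : IsLocalMin (fun q : En n × ℝ × ℝ =>
      θ q.2.2 * w (q.1, q.2.1) - u (q.1, q.2.2) - ρ q.2.2 * v q.1 + φ q.2) (x, t, s)) :
    ∀ᶠ q in 𝓝 (x, x, x, t, s), tripledGap q = 0 →
      tripled θ ρ (fun τ => φ τ + ((τ.1 - t) ^ 2 + (τ.2 - s) ^ 2)) w u v x q ≤
        tripled θ ρ (fun τ => φ τ + ((τ.1 - t) ^ 2 + (τ.2 - s) ^ 2)) w u v x (x, x, x, t, s) →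
      q = (x, x, x, t, s) := by
  filter_upwards [hmin.comp_continuous (b := (x, x, x, t, s))
    (g := fun q : En n × En n × En n × ℝ × ℝ => (q.1, q.2.2.2)) (by fun_prop)]
  rintro ⟨x', y', z', t', s'⟩ hq hgap hle
  have hy : y' = x' := by
    rw [← sub_eq_zero, ← norm_eq_zero]
    simp only [tripledGap] at hgap
    nlinarith [sq_nonneg ‖z' - x'‖]
  have hz : z' = x' := by
    rw [← sub_eq_zero, ← norm_eq_zero]
    simp only [tripledGap] at hgap
    nlinarith [sq_nonneg ‖y' - x'‖]
  subst y' z'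
  simp only [tripled, Function.comp_apply, sub_self, norm_zero] at hq hle
  have hx : x' = x := by
    rw [← sub_eq_zero, ← norm_eq_zero]
    nlinarith [sq_nonneg (t' - t), sq_nonneg (s' - s)]
  have ht : t' = t := by nlinarith [sq_nonneg ‖x' - x‖, sq_nonneg (s' - s)]
  have hs : s' = s := by nlinarith [sq_nonneg ‖x' - x‖, sq_nonneg (t' - t)]
  rw [hx, ht, hs]

theorem fderiv_add_sub_sq_add_sub_sq {t s : ℝ} (hφ : DifferentiableAt ℝ φ (t, s)) :
    fderiv ℝ (fun τ => φ τ + ((τ.1 - t) ^ 2 + (τ.2 - s) ^ 2)) (t, s) = fderiv ℝ φ (t, s) := by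
  have hmin : IsLocalMin (fun τ : ℝ × ℝ => (τ.1 - t) ^ 2 + (τ.2 - s) ^ 2) (t, s) :=
    .of_forall fun τ => by
      simpa using add_nonneg (sq_nonneg (τ.1 - t)) (sq_nonneg (τ.2 - s))
  rw [fderiv_fun_add hφ (by fun_prop), hmin.fderiv_eq_zero, add_zero]

theorem exists_jets_of_isLocalMin (hH : Continuous fun q : En n × En n => H q.1 q.2)
    (hHcoer : Coercive H) (hK : Continuous fun q : En n × En n => K q.1 q.2) (hKcoer : Coercive K)
    (hw : Continuous w) (hwo : Continuous wo) (hwsuper : EvolSuperIneq H w wo)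
    (hu : Continuous u) (huo : Continuous uo) (husub : EvolSubIneq H u uo)
    (hv : Continuous v) (hvsub : SingleSub K v 0)
    (hθ : ContDiff ℝ 1 θ) (hθ₀ : ∀ s, 0 < θ s) (hρ : ContDiff ℝ 1 ρ) (hρ₀ : ∀ s, 0 < ρ s)
    (hφ : ContDiff ℝ 1 φ) {x : En n} {t s : ℝ} (ht : 0 < t) (hs : 0 < s)
    (hmin : IsLocalMin (fun q : En n × ℝ × ℝ =>
      θ q.2.2 * w (q.1, q.2.1) - u (q.1, q.2.2) - ρ q.2.2 * v q.1 + φ q.2) (x, t, s)) :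
    ∃ a b,
      0 ≤ -(θ s)⁻¹ * fderiv ℝ φ (t, s) (1, 0) + H x ((θ s)⁻¹ • (a + ρ s • b))
        + w (x, t) - wo (x, t) ∧
      deriv θ s * w (x, t) - deriv ρ s * v x + fderiv ℝ φ (t, s) (0, 1) + H x a
        + u (x, s) - uo (x, s) ≤ 0 ∧
      K x b ≤ 0 := by
  let φ' : ℝ × ℝ → ℝ := fun τ => φ τ + ((τ.1 - t) ^ 2 + (τ.2 - s) ^ 2)
  have hφ' : ContDiff ℝ 1 φ' := by fun_prop
  have hθc := hθ.continuous
  have hρc := hρ.continuous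
  have hφc := hφ'.continuous
  obtain ⟨p, hp, hp_min⟩ := exists_tendsto_isLocalMin_penalized
    (f := tripled θ ρ φ' w u v x) (g := tripledGap) (by unfold tripled; fun_prop)
    (by unfold tripledGap; fun_prop) (fun q => by unfold tripledGap; positivity)
    (l := (x, x, x, t, s)) (by simp [tripledGap]) (eventually_eq_of_tripled_le hmin)
  obtain ⟨B, hB, hfiber⟩ := exists_isCompact_tripledJets_fiber (wo := wo) (e := x) hHcoer hKcoer
    hθ hρ hφ' hw hu huo hv (x, x, x, t, s)
  have ht' : ∀ᶠ q : En n × En n × En n × ℝ × ℝ in 𝓝 (x, x, x, t, s), 0 < q.2.2.2.1 :=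
    (isOpen_lt continuous_const (by fun_prop)).mem_nhds ht
  have hs' : ∀ᶠ q : En n × En n × En n × ℝ × ℝ in 𝓝 (x, x, x, t, s), 0 < q.2.2.2.2 :=
    (isOpen_lt continuous_const (by fun_prop)).mem_nhds hs
  obtain ⟨⟨a, b⟩, -, hab⟩ := exists_mem_of_tendsto_of_isCompact hp
    (isClosed_tripledJets hH hK hθ hθ₀ hρ hφ' hw hwo hu huo hv (e := x)) hB (by
      filter_upwards [hp_min, hp.eventually hfiber, hp.eventually ht', hp.eventually hs']
        with m hmin hB ht hs
      obtain ⟨ab, hab⟩ := exists_mem_tripledJets hwsuper husub hvsub hθ hθ₀ hρ hρ₀ hφ' ht hs hmin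
      exact ⟨ab, hB ab hab, hab⟩)
  have hφd := fderiv_add_sub_sq_add_sub_sq (hφ.differentiable one_ne_zero (t, s))
  exact ⟨a, b, by simpa only [tripledJets, mem_ofPred_eq, φ', hφd, sub_self, smul_zero, sub_zero]
    using hab⟩

/-- Doubling of variables, as tripling with the third equation `‖Dv‖ = 0` and `v = 0`, which forces
the jet `b` to vanish. -/
theorem fderiv_apply_one_one_le_of_isLocalMin_sub
    (hH : Continuous fun q : En n × En n => H q.1 q.2) (hHcoer : Coercive H)
    (hw : Continuous w) (hwo : Continuous wo) (hwsuper : EvolSuperIneq H w wo)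
    (hu : Continuous u) (huo : Continuous uo) (husub : EvolSubIneq H u uo)
    (hφ : ContDiff ℝ 1 φ) {x : En n} {t s : ℝ} (ht : 0 < t) (hs : 0 < s)
    (hmin : IsLocalMin (fun q : En n × ℝ × ℝ => w (q.1, q.2.1) - u (q.1, q.2.2) + φ q.2)
      (x, t, s)) :
    fderiv ℝ φ (t, s) (1, 1) ≤ (w (x, t) - wo (x, t)) - (u (x, s) - uo (x, s)) := by
  have hzero : SingleSub (fun _ p : En n => ‖p‖) (fun _ => 0) 0 := by
    intro ψ _ x₀ hmax
    have hψ : IsLocalMin ψ x₀ := by simpa using hmax.neg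
    simp [gradient, hψ.fderiv_eq_zero]
  obtain ⟨a, b, hsuper, hsub, hb⟩ := exists_jets_of_isLocalMin (K := fun _ p => ‖p‖)
    (θ := fun _ => 1) (ρ := fun _ => 1) (v := fun _ => 0) hH hHcoer (by fun_prop)
    (fun M => ⟨M, fun _ _ h => h⟩) hw hwo hwsuper hu huo husub continuous_const hzero
    contDiff_const (fun _ => one_pos) contDiff_const (fun _ => one_pos) hφ ht hs
    (by simpa using hmin)
  have hsplit : fderiv ℝ φ (t, s) (1, 1) =
      fderiv ℝ φ (t, s) (1, 0) + fderiv ℝ φ (t, s) (0, 1) := by rw [← map_add]; simp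
  simp only [norm_le_zero_iff.1 hb, inv_one, one_smul, smul_zero, add_zero, deriv_const,
    zero_mul] at hsuper hsub
  linarith

end Tripling

section CouplingDecay

variable {n : ℕ}

theorem exists_isLocalMin_time_doubled {f : En n × ℝ × ℝ → ℝ} (hf : Continuous f)
    (hper : ∀ x k τ, f (x + intVec n k, τ) = f (x, τ)) {T : ℝ} {x₀ : En n} {t₀ : ℝ}
    (ht₀ : t₀ ∈ Icc 0 T) (hleft : ∀ x, f (x₀, t₀, t₀) < f (x, 0, 0))
    (hright : ∀ x, f (x₀, t₀, t₀) < f (x, T, T)) :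
    ∃ x t, 0 < t ∧ f (x, t, t) ≤ f (x₀, t₀, t₀) ∧ ∀ U ∈ 𝓝 (x, t, t), ∃ q ∈ U, ∃ m : ℕ,
      IsLocalMin (fun q => f q + m * (q.2.1 - q.2.2) ^ 2) q := by
  let K : Set (ℝ × ℝ) := Icc 0 T ×ˢ Icc 0 T
  have hK : IsCompact K := isCompact_Icc.prod isCompact_Icc
  have hex (m : ℕ) := exists_isMinOn_univ_prod_of_periodic
    (F := fun q => f q + m * (q.2.1 - q.2.2) ^ 2) (by fun_prop) (fun x k τ => by simp only [hper])
    hK ⟨(t₀, t₀), ht₀, ht₀⟩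
  choose p hp_mem hp_min using hex
  obtain ⟨⟨x, t, s⟩, ⟨-, ht, hs⟩, hcluster⟩ :=
    ((isCompact_closedBall (0 : En n) √n).prod hK).exists_mapClusterPt (f := atTop) (u := p)
      (tendsto_principal.2 (.of_forall hp_mem))
  obtain ⟨hgap, hle⟩ := eq_zero_and_le_of_mapClusterPt_penalized hf
    (g := fun q => (q.2.1 - q.2.2) ^ 2) (by fun_prop) (fun q => sq_nonneg _)
    (fun m => by simpa using hp_min m (show (x₀, t₀, t₀) ∈ _ from ⟨mem_univ _, ht₀, ht₀⟩)) hcluster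
  obtain rfl : t = s := sub_eq_zero.1 (pow_eq_zero_iff two_ne_zero |>.1 hgap)
  have ht_pos : 0 < t := ht.1.lt_of_ne (by rintro rfl; exact (hleft x).not_ge hle)
  have ht_lt : t < T := ht.2.lt_of_ne (by rintro rfl; exact (hright x).not_ge hle)
  refine ⟨x, t, ht_pos, hle, fun U hU => ?_⟩
  have hinterior : univ ×ˢ Ioo 0 T ×ˢ Ioo 0 T ∈ 𝓝 (x, t, t) :=
    (isOpen_univ.prod (isOpen_Ioo.prod isOpen_Ioo)).mem_nhds
      ⟨mem_univ x, ⟨ht_pos, ht_lt⟩, ht_pos, ht_lt⟩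
  obtain ⟨m, hmU, hm⟩ := (hcluster.frequently (inter_mem hU hinterior)).exists
  refine ⟨p m, hmU, m, (hp_min m).isLocalMin (mem_of_superset
    ((isOpen_univ.prod (isOpen_Ioo.prod isOpen_Ioo)).mem_nhds hm) ?_)⟩
  exact prod_mono_right (prod_mono Ioo_subset_Icc_self Ioo_subset_Icc_self)

theorem fderiv_exp_add_mul_sub_sq_apply_one_one (E ε m t s : ℝ) :
    fderiv ℝ (fun τ : ℝ × ℝ => E * Real.exp (-2 * τ.2) + ε * τ.2 + m * (τ.1 - τ.2) ^ 2) (t, s)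
      (1, 1) = -2 * (E * Real.exp (-2 * s)) + ε := by
  have hdiff : DifferentiableAt ℝ (fun τ : ℝ × ℝ =>
      E * Real.exp (-2 * τ.2) + ε * τ.2 + m * (τ.1 - τ.2) ^ 2) (t, s) := by fun_prop
  rw [← hdiff.lineDeriv_eq_fderiv]
  have hexp : HasDerivAt (fun r : ℝ => Real.exp (-2 * (s + r))) (Real.exp (-2 * s) * -2) 0 := by
    simpa using (((hasDerivAt_id (0 : ℝ)).const_add s).const_mul (-2)).exp
  have hlin : HasDerivAt (fun r : ℝ => ε * (s + r)) ε 0 := by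
    simpa using ((hasDerivAt_id (0 : ℝ)).const_add s).const_mul ε
  convert (((hexp.const_mul E).fun_add hlin).add_const (m * (t - s) ^ 2)).deriv using 1
  · simp [lineDeriv]
  · ring

/-- The time-doubled functional whose sign on the diagonal `t = s` compares `u₁ - u₂` with
`E * exp (-2 * s)`; the term `ε * s` makes it nonnegative for large times. -/
noncomputable def decayGap (u₁ u₂ : En n × ℝ → ℝ) (E ε : ℝ) (q : En n × ℝ × ℝ) : ℝ :=
  u₂ (q.1, q.2.1) - u₁ (q.1, q.2.2) + (E * Real.exp (-2 * q.2.2) + ε * q.2.2)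

variable {H : En n → En n → ℝ} {u₁ u₂ : En n × ℝ → ℝ} {E : ℝ}

theorem exists_isLocalMin_decayGap (hu₁ : Continuous u₁) (hu₂ : Continuous u₂)
    (hper₁ : ZPeriodicST u₁) (hper₂ : ZPeriodicST u₂) (hE₀ : 0 ≤ E)
    (hE : ∀ x t, 0 ≤ t → u₁ (x, t) - u₂ (x, t) ≤ E) {ε : ℝ} (hε : 0 < ε) {x : En n} {t : ℝ}
    (ht : 0 ≤ t) (hneg : decayGap u₁ u₂ E ε (x, t, t) < 0) :
    ∃ x t, 0 < t ∧ decayGap u₁ u₂ E ε (x, t, t) < 0 ∧ ∀ U ∈ 𝓝 (x, t, t), ∃ q ∈ U, ∃ m : ℕ,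
      IsLocalMin (fun q => decayGap u₁ u₂ E ε q + m * (q.2.1 - q.2.2) ^ 2) q := by
  have hleft (y : En n) : 0 ≤ decayGap u₁ u₂ E ε (y, 0, 0) := by
    simp only [decayGap, mul_zero, Real.exp_zero]
    linarith [hE y 0 le_rfl]
  set T := max t (E / ε)
  have hright (y : En n) : 0 ≤ decayGap u₁ u₂ E ε (y, T, T) := by
    have hεT : E ≤ ε * T := (div_le_iff₀' hε).1 (le_max_right _ _)
    have hexp : 0 ≤ E * Real.exp (-2 * T) := by positivity
    simp only [decayGap]
    linarith [hE y T (ht.trans (le_max_left _ _))]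
  obtain ⟨x₁, t₁, ht₁, hle, hnear⟩ := exists_isLocalMin_time_doubled
    (f := decayGap u₁ u₂ E ε) (by unfold decayGap; fun_prop)
    (fun y k τ => by simp only [decayGap, hper₁ y k, hper₂ y k]) (T := T) ⟨ht, le_max_left _ _⟩
    (fun y => hneg.trans_le (hleft y)) (fun y => hneg.trans_le (hright y))
  exact ⟨x₁, t₁, ht₁, hle.trans_lt hneg, hnear⟩

theorem sub_le_mul_exp_neg_two_mul (hH : Continuous fun q : En n × En n => H q.1 q.2)
    (hHcoer : Coercive H) (hu₁ : Continuous u₁) (hu₂ : Continuous u₂) (hper₁ : ZPeriodicST u₁)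
    (hper₂ : ZPeriodicST u₂) (hsub : EvolSubIneq H u₁ u₂) (hsuper : EvolSuperIneq H u₂ u₁)
    (hE : ∀ x t, 0 ≤ t → u₁ (x, t) - u₂ (x, t) ≤ E) (x : En n) {t : ℝ} (ht : 0 ≤ t) :
    u₁ (x, t) - u₂ (x, t) ≤ E * Real.exp (-2 * t) := by
  by_contra! hlt
  obtain ⟨ε, hε, hεt⟩ := exists_pos_mul_lt (sub_pos.2 hlt) t
  have hE₀ : 0 ≤ E := by
    have hexp : Real.exp (-2 * t) ≤ 1 := Real.exp_le_one_iff.2 (by linarith)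
    nlinarith [hE x t ht]
  obtain ⟨x₁, t₁, ht₁, hneg, hnear⟩ := exists_isLocalMin_decayGap hu₁ hu₂ hper₁ hper₂ hE₀ hE hε
    (x := x) ht (by simp only [decayGap]; linarith)
  have hstrict : ∀ᶠ q in 𝓝 (x₁, t₁, t₁),
      u₂ (q.1, q.2.1) - u₁ (q.1, q.2.1) - (u₁ (q.1, q.2.2) - u₂ (q.1, q.2.2))
        < -2 * (E * Real.exp (-2 * q.2.2)) + ε := by
    refine (isOpen_lt (by fun_prop) (by fun_prop)).mem_nhds ?_
    have : 0 < ε * t₁ := by positivity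
    simp only [decayGap, mem_ofPred_eq] at hneg ⊢
    linarith
  have hpos : ∀ᶠ q : En n × ℝ × ℝ in 𝓝 (x₁, t₁, t₁), 0 < q.2.1 ∧ 0 < q.2.2 :=
    ((isOpen_lt continuous_const (by fun_prop)).and
      (isOpen_lt continuous_const (by fun_prop))).mem_nhds ⟨ht₁, ht₁⟩
  obtain ⟨⟨y, τ, σ⟩, ⟨hq, hτ, hσ⟩, m, hmin⟩ := hnear _ (hstrict.and hpos)
  have hderiv := fderiv_apply_one_one_le_of_isLocalMin_sub
    (φ := fun τ : ℝ × ℝ => E * Real.exp (-2 * τ.2) + ε * τ.2 + m * (τ.1 - τ.2) ^ 2)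
    hH hHcoer hu₂ hu₁ hsuper hu₁ hu₂ hsub (by fun_prop) hτ hσ
    (by simpa [decayGap, add_assoc] using hmin)
  rw [fderiv_exp_add_mul_sub_sq_apply_one_one] at hderiv
  exact hq.not_ge hderiv

end CouplingDecay

section PlusEstimate

variable {n : ℕ} {H : En n → En n → ℝ}

theorem A8plusAt.mul_add_le {η ψ : ℝ} (hA : A8plusAt H η ψ) {g : ℝ} (hg : 1 ≤ g) {x a b : En n}
    (hb : H x b ≤ 0) (hη : η ≤ H x (g⁻¹ • (a + (g - 1) • b))) :
    g * H x (g⁻¹ • (a + (g - 1) • b)) + ψ * (g - 1) ≤ H x a := by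
  have hg₀ : 0 < g := one_pos.trans_le hg
  have hsplit : g⁻¹ • (a + (g - 1) • b) = g⁻¹ • (a - b) + b := by
    match_scalars <;> field_simp
    ring
  have h := hA x (g⁻¹ • (a - b)) b (hsplit ▸ hη) hb g⁻¹ (inv_pos.2 hg₀) (inv_le_one_of_one_le₀ hg)
  rw [inv_inv, smul_inv_smul₀ hg₀.ne', sub_add_cancel, ← hsplit] at h
  have h' := mul_le_mul_of_nonneg_left h hg₀.le
  rw [mul_inv_cancel_left₀ hg₀.ne'] at h'
  calc g * H x (g⁻¹ • (a + (g - 1) • b)) + ψ * (g - 1)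
      = g * (H x (g⁻¹ • (a + (g - 1) • b)) + ψ * (1 - g⁻¹)) := by field_simp
    _ ≤ H x a := h'

section TimeDerivatives

variable {G : ℝ → ℝ} (η ε t : ℝ) {s : ℝ}

theorem fderiv_mul_sub_add_mul_apply_one_zero (hG : DifferentiableAt ℝ G s) :
    fderiv ℝ (fun τ : ℝ × ℝ => G τ.2 * (η * (τ.1 - τ.2)) + ε * τ.2) (t, s) (1, 0) = G s * η := by
  refine (hasDerivAt_comp_mk_right (by fun_prop)).unique ?_
  simpa using (((((hasDerivAt_id t).sub_const s).const_mul η).const_mul (G s)).add_const (ε * s))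

theorem fderiv_mul_sub_add_mul_apply_zero_one (hG : DifferentiableAt ℝ G s) :
    fderiv ℝ (fun τ : ℝ × ℝ => G τ.2 * (η * (τ.1 - τ.2)) + ε * τ.2) (t, s) (0, 1) =
      deriv G s * (η * (t - s)) - G s * η + ε := by
  refine (hasDerivAt_comp_mk_left (by fun_prop)).unique ?_
  convert (hG.hasDerivAt.fun_mul (((hasDerivAt_id' s).const_sub t).const_mul η)).fun_add
    ((hasDerivAt_id' s).const_mul ε) using 1
  ring

end TimeDerivatives

/-- A factor `G` decreasing from `G s₀ ≥ C` to values close to `1`, slowly enough that (A8)⁺ with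
constant `ψ` absorbs both its decrease and a coupling error of size `δ`. -/
structure PlusBarrier (C ψ s₀ : ℝ) (δ G : ℝ → ℝ) : Prop where
  contDiff : ContDiff ℝ 1 G
  one_lt : ∀ s, 1 < G s
  deriv_nonpos : ∀ s, deriv G s ≤ 0
  le_initial : C ≤ G s₀
  error_le : ∀ s, s₀ ≤ s → -C * deriv G s + (G s + 1) * δ s ≤ ψ * (G s - 1)

/-- The functional minimised over points `(x, t, s)` with `s₀ ≤ s ≤ t`: the gap in
`u (x, s) - v x ≤ G s * (u (x, t) - v x + η * (t - s))`, plus the term `ε * s` that makes it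
positive for large `t`. -/
def plusGap (u : En n × ℝ → ℝ) (v : En n → ℝ) (G : ℝ → ℝ) (η ε : ℝ) (q : En n × ℝ × ℝ) : ℝ :=
  G q.2.2 * (u (q.1, q.2.1) - v q.1 + η * (q.2.1 - q.2.2)) - (u (q.1, q.2.2) - v q.1) + ε * q.2.2

variable {u uo : En n × ℝ → ℝ} {v : En n → ℝ} {G δ : ℝ → ℝ} {C η ψ s₀ : ℝ}

theorem PlusBarrier.nonneg_of_isLocalMin (hG : PlusBarrier C ψ s₀ δ G)
    (hA : A8plusAt H (η / 2) ψ)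
    (hH : Continuous fun q : En n × En n => H q.1 q.2) (hHcoer : Coercive H) (hv : Continuous v)
    (hvsub : SingleSub H v 0) (hu : Continuous u) (huo : Continuous uo)
    (husub : EvolSubIneq H u uo) (husuper : EvolSuperIneq H u uo) {ε : ℝ} (hε : 0 < ε)
    {x : En n} {t s : ℝ} (hs₀ : s₀ ≤ s) (hs : 0 < s) (ht : 0 < t) (hδ : δ s ≤ η / 2)
    (hut : u (x, t) - uo (x, t) ≤ δ s) (hus : -δ s ≤ u (x, s) - uo (x, s))
    (hC : u (x, s) - v x ≤ C) (hL : 0 ≤ u (x, t) - v x + η * (t - s))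
    (hmin : IsLocalMin (plusGap u v G η ε) (x, t, s)) :
    0 ≤ G s * (u (x, t) - v x + η * (t - s)) - (u (x, s) - v x) := by
  by_contra! hneg
  have hG₁ := hG.one_lt
  have hGc := hG.contDiff
  obtain ⟨a, b, hsuper, hsub, hb⟩ := exists_jets_of_isLocalMin (θ := G) (ρ := fun s => G s - 1)
    (φ := fun τ => G τ.2 * (η * (τ.1 - τ.2)) + ε * τ.2) hH hHcoer hH hHcoer hu huo husuper hu huo
    husub hv hvsub hGc (fun s => one_pos.trans (hG₁ s)) (by fun_prop) (fun s => sub_pos.2 (hG₁ s))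
    (by fun_prop) ht hs (by convert hmin using 2 with q; simp only [plusGap]; ring)
  have hGd : DifferentiableAt ℝ G s := hGc.differentiable one_ne_zero s
  rw [fderiv_mul_sub_add_mul_apply_one_zero _ _ _ hGd, neg_mul,
    inv_mul_cancel_left₀ (one_pos.trans (hG₁ s)).ne'] at hsuper
  rw [fderiv_mul_sub_add_mul_apply_zero_one _ _ _ hGd, deriv_sub_const] at hsub
  set L := u (x, t) - v x + η * (t - s) with hLdef
  set h := H x ((G s)⁻¹ • (a + (G s - 1) • b))
  have hh : G s * (η - δ s) ≤ G s * h := by gcongr <;> linarith [hG₁ s]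
  have hHa : G s * h + ψ * (G s - 1) ≤ H x a := hA.mul_add_le (hG₁ s).le hb (by linarith)
  have hLC : L ≤ C := by nlinarith [hG₁ s]
  have hG'L : C * deriv G s ≤ L * deriv G s :=
    mul_le_mul_of_nonpos_right hLC (hG.deriv_nonpos s)
  have herr := hG.error_le s hs₀
  have : L * deriv G s - G s * η + ε + H x a + u (x, s) - uo (x, s) ≤ 0 := by
    rw [hLdef]
    linarith
  linarith

theorem PlusBarrier.lt_of_plusGap_neg (hG : PlusBarrier C ψ s₀ δ G) (hs₀ : 0 ≤ s₀) (hη : 0 < η)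
    (hnorm : ∀ x t, s₀ ≤ t → 1 ≤ u (x, t) - v x ∧ u (x, t) - v x ≤ C) {ε T : ℝ} (hε : 0 < ε)
    (hT : C / η + C / ε ≤ T) {x : En n} {s t : ℝ} (hs : s₀ ≤ s) (hst : s ≤ t) (htT : t ≤ T)
    (hneg : plusGap u v G η ε (x, t, s) < 0) : s₀ < s ∧ s < t ∧ t < T := by
  have hG₁ := hG.one_lt s
  have hus := hnorm x s hs
  have hut := hnorm x t (hs.trans hst)
  have hηts : 0 ≤ η * (t - s) := mul_nonneg hη.le (sub_nonneg.2 hst)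
  have hεs : 0 ≤ ε * s := mul_nonneg hε.le (hs₀.trans hs)
  simp only [plusGap] at hneg
  refine ⟨hs.lt_of_ne ?_, hst.lt_of_ne ?_, htT.lt_of_ne ?_⟩
  · rintro rfl
    nlinarith [hG.le_initial]
  · rintro rfl
    nlinarith
  · rintro rfl
    have hlarge : C ≤ η * (t - s) + ε * s := by
      rcases le_total (C / ε) s with h | h
      · rw [div_le_iff₀' hε] at h
        linarith
      · have : C / η ≤ t - s := by linarith
        rw [div_le_iff₀' hη] at this
        linarith
    nlinarith

theorem PlusBarrier.exists_isLocalMin_plusGap (hG : PlusBarrier C ψ s₀ δ G) (hs₀ : 0 ≤ s₀)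
    (hη : 0 < η) (hv : Continuous v) (hvper : ZPeriodic v) (hu : Continuous u)
    (huper : ZPeriodicST u)
    (hnorm : ∀ x t, s₀ ≤ t → 1 ≤ u (x, t) - v x ∧ u (x, t) - v x ≤ C) {ε : ℝ} (hε : 0 < ε)
    {x : En n} {s t : ℝ} (hs : s₀ ≤ s) (hst : s ≤ t) (hneg : plusGap u v G η ε (x, t, s) < 0) :
    ∃ x t s, s₀ < s ∧ s < t ∧ plusGap u v G η ε (x, t, s) < 0 ∧
      IsLocalMin (plusGap u v G η ε) (x, t, s) := by
  have hGcont := hG.contDiff.continuous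
  set T := max t (C / η + C / ε)
  let K : Set (ℝ × ℝ) := {τ | s₀ ≤ τ.2 ∧ τ.2 ≤ τ.1 ∧ τ.1 ≤ T}
  have hK : IsCompact K := (isCompact_Icc.prod isCompact_Icc).of_isClosed_subset
    ((isClosed_le continuous_const continuous_snd).and ((isClosed_le continuous_snd
      continuous_fst).and (isClosed_le continuous_fst continuous_const)))
    fun τ ⟨hs₀τ, hτ, hτT⟩ => (⟨⟨hs₀τ.trans hτ, hτT⟩, hs₀τ, hτ.trans hτT⟩ :
      τ ∈ Icc s₀ T ×ˢ Icc s₀ T)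
  obtain ⟨⟨x₁, t₁, s₁⟩, ⟨-, hs₁, hst₁, ht₁⟩, hmin⟩ := exists_isMinOn_univ_prod_of_periodic
    (F := plusGap u v G η ε) (by unfold plusGap; fun_prop)
    (fun y k τ => by simp only [plusGap, huper y k, hvper y k]) hK
    ⟨(t, s), hs, hst, le_max_left _ _⟩
  have hneg₁ : plusGap u v G η ε (x₁, t₁, s₁) < 0 :=
    (hmin (show (x, t, s) ∈ _ from ⟨mem_univ _, hs, hst, le_max_left _ _⟩)).trans_lt hneg
  obtain ⟨hs₁', hst₁', ht₁'⟩ :=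
    hG.lt_of_plusGap_neg hs₀ hη hnorm hε (le_max_right _ _) hs₁ hst₁ ht₁ hneg₁
  refine ⟨x₁, t₁, s₁, hs₁', hst₁', hneg₁, hmin.isLocalMin (prod_mem_nhds univ_mem ?_)⟩
  filter_upwards [((isOpen_lt continuous_const continuous_snd).and ((isOpen_lt continuous_snd
    continuous_fst).and (isOpen_lt continuous_fst continuous_const))).mem_nhds
    (show (t₁, s₁) ∈ _ from ⟨hs₁', hst₁', ht₁'⟩)] with τ hτ
  exact ⟨hτ.1.le, hτ.2.1.le, hτ.2.2.le⟩

theorem PlusBarrier.sub_le_mul (hG : PlusBarrier C ψ s₀ δ G) (hs₀ : 0 ≤ s₀) (hη : 0 < η)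
    (hA : A8plusAt H (η / 2) ψ) (hH : Continuous fun q : En n × En n => H q.1 q.2)
    (hHcoer : Coercive H) (hv : Continuous v) (hvper : ZPeriodic v) (hvsub : SingleSub H v 0)
    (hu : Continuous u) (huo : Continuous uo) (huper : ZPeriodicST u)
    (husub : EvolSubIneq H u uo) (husuper : EvolSuperIneq H u uo)
    (hnorm : ∀ x t, s₀ ≤ t → 1 ≤ u (x, t) - v x ∧ u (x, t) - v x ≤ C)
    (hδ : ∀ s, s₀ ≤ s → δ s ≤ η / 2)
    (hclose : ∀ x s t, s₀ ≤ s → s ≤ t → |u (x, t) - uo (x, t)| ≤ δ s)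
    (x : En n) {s t : ℝ} (hs : s₀ ≤ s) (hst : s ≤ t) :
    u (x, s) - v x ≤ G s * (u (x, t) - v x + η * (t - s)) := by
  by_contra! hlt
  obtain ⟨ε, hε, hεs⟩ := exists_pos_mul_lt (sub_pos.2 hlt) s
  obtain ⟨x₁, t₁, s₁, hs₁, hst₁, hneg, hmin⟩ := hG.exists_isLocalMin_plusGap hs₀ hη hv hvper hu
    huper hnorm hε (x := x) hs hst (by simp only [plusGap]; linarith)
  have hs₁_pos : 0 < s₁ := hs₀.trans_lt hs₁
  have hnonneg := hG.nonneg_of_isLocalMin hA hH hHcoer hv hvsub hu huo husub husuper hε hs₁.le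
    hs₁_pos (hs₁_pos.trans hst₁) (hδ s₁ hs₁.le) (abs_le.1 (hclose x₁ s₁ t₁ hs₁.le hst₁.le)).2
    (abs_le.1 (hclose x₁ s₁ s₁ hs₁.le le_rfl)).1 (hnorm x₁ s₁ hs₁.le).2
    (by nlinarith [(hnorm x₁ t₁ (hs₁.trans hst₁).le).1]) hmin
  have : 0 < ε * s₁ := by positivity
  simp only [plusGap] at hneg
  linarith

end PlusEstimate

section MinusEstimate

variable {n : ℕ} {H : En n → En n → ℝ} {u uo : En n × ℝ → ℝ}

/-- Letting `μ → ∞` in (A8)⁻ with `H x p < 0` gives `H x q ≤ 0` for every `q` with `0 ≤ H x q`,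
which coercivity excludes. -/
theorem A8minus.nonneg (hn : 1 ≤ n) (hH : Continuous fun q : En n × En n => H q.1 q.2)
    (hHcoer : Coercive H) {η₀ : ℝ} (hη₀ : 0 < η₀) (hA : A8minus H η₀) (x p : En n) :
    0 ≤ H x p := by
  by_contra! hneg
  obtain ⟨r, hr⟩ := hHcoer 1
  have : Nonempty (Fin n) := ⟨⟨0, hn⟩⟩
  obtain ⟨q, hq⟩ := NormedSpace.exists_lt_norm ℝ (En n) r
  have hHq : 1 ≤ H x q := hr x q hq.le
  obtain ⟨ψ, hψ, hAψ⟩ := hA (min η₀ (-H x p)) (lt_min hη₀ (neg_pos.2 hneg)) (min_le_left _ _)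
  have hle : ∀ᶠ μ : ℝ in atTop, H x (μ⁻¹ • (p - q) + q) ≤ 0 := by
    filter_upwards [eventually_ge_atTop 1] with μ hμ
    have hμ₀ : 0 < μ := one_pos.trans_le hμ
    have h := hAψ x (p - q) q (by rw [sub_add_cancel, le_neg]; exact min_le_right _ _)
      (zero_le_one.trans hHq) μ hμ
    rw [sub_add_cancel] at h
    have : 0 ≤ ψ * (μ - 1) / μ := div_nonneg (mul_nonneg hψ.le (sub_nonneg.2 hμ)) hμ₀.le
    exact nonpos_of_mul_nonpos_right (by linarith : μ * _ ≤ 0) hμ₀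
  have hcont : Continuous fun e : ℝ => H x (e • (p - q) + q) := by fun_prop
  have hlim := (hcont.tendsto 0).comp tendsto_inv_atTop_zero
  have hHq' : H x q ≤ 0 := by simpa using le_of_tendsto hlim hle
  linarith

theorem EvolSubIneq.deriv_le_of_isLocalMin_of_nonneg (hsub : EvolSubIneq H u uo)
    (hH : ∀ x p, 0 ≤ H x p) (hu : Continuous u) (huo : Continuous uo) {g : ℝ → ℝ}
    (hg : ContDiff ℝ 1 g) {x : En n} {t : ℝ} (ht : 0 < t)
    (hmin : IsLocalMin (fun τ => g τ - u (x, τ)) t) :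
    deriv g t + u (x, t) - uo (x, t) ≤ 0 := by
  have hgcont := hg.continuous
  have := hg.continuous_deriv_one
  obtain ⟨p, hp, hp_min⟩ := exists_tendsto_isLocalMin_penalized (l := (x, t))
    (f := fun q => g q.2 + (q.2 - t) ^ 2 - u q) (g := fun q => ‖q.1 - x‖ ^ 2)
    (by fun_prop) (by fun_prop) (fun q => by positivity) (by simp) (by
      filter_upwards [continuous_snd.continuousAt.eventually hmin] with ⟨y, τ⟩ hτ hy hle
      obtain rfl : y = x := by simpa [sub_eq_zero] using hy
      have hsq : (τ - t) ^ 2 ≤ 0 := by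
        simp only [sub_self] at hτ hle
        linarith
      rw [sub_eq_zero.1 (pow_eq_zero_iff two_ne_zero |>.1 (hsq.antisymm (sq_nonneg _)))])
  have hcont : Continuous fun q : En n × ℝ => deriv g q.2 + 2 * (q.2 - t) + u q - uo q := by
    fun_prop
  have hle : ∀ᶠ m : ℕ in atTop, deriv g (p m).2 + 2 * ((p m).2 - t) + u (p m) - uo (p m) ≤ 0 := by
    filter_upwards [hp_min, (continuous_snd.tendsto _).comp hp |>.eventually (lt_mem_nhds ht)]
      with m hm ht_pos
    have hderiv : HasDerivAt (fun τ => g τ + (τ - t) ^ 2)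
        (deriv g (p m).2 + 2 * ((p m).2 - t)) (p m).2 := by
      simpa using (hg.differentiable one_ne_zero (p m).2).hasDerivAt.fun_add
        (((hasDerivAt_id (p m).2).sub_const t).fun_pow 2)
    have := hsub.nonpos_of_isLocalMin (contDiff_mul_norm_sub_sq m x) (by fun_prop)
      (hasGradientAt_mul_norm_sub_sq m x _) hderiv ht_pos
      (by filter_upwards [hm] with q hq; linarith)
    linarith [hH (p m).1 ((2 * (m : ℝ)) • ((p m).1 - x))]
  simpa using le_of_tendsto ((hcont.tendsto _).comp hp) hle

theorem le_of_forall_not_isLocalMin {f : ℝ → ℝ} (hf : Continuous f)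
    (hf_top : Tendsto f atTop atTop) {s t : ℝ} (hmin : ∀ τ > s, ¬IsLocalMin f τ) (hst : s ≤ t) :
    f s ≤ f t := by
  by_contra! hlt
  obtain ⟨T, htT, hfT⟩ :=
    ((eventually_ge_atTop t).and (hf_top.eventually (eventually_gt_atTop (f t)))).exists
  obtain ⟨τ, ⟨hsτ, hτT⟩, hτ⟩ :=
    isCompact_Icc.exists_isMinOn ⟨t, hst, htT⟩ (hf.continuousOn (s := Icc s T))
  have hτt : f τ ≤ f t := hτ ⟨hst, htT⟩
  have hsτ' : s < τ := hsτ.lt_of_ne (by rintro rfl; exact hlt.not_ge hτt)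
  have hτT' : τ < T := hτT.lt_of_ne (by rintro rfl; exact hfT.not_ge hτt)
  exact hmin τ hsτ' (hτ.isLocalMin (Icc_mem_nhds hsτ' hτT'))

theorem EvolSubIneq.le_add_of_nonneg (hsub : EvolSubIneq H u uo) (hH : ∀ x p, 0 ≤ H x p)
    (hu : Continuous u) (huo : Continuous uo) {x : En n} {B E : ℝ}
    (hB : ∀ t, 0 ≤ t → u (x, t) ≤ B)
    (hE : ∀ t, 0 ≤ t → -(E * Real.exp (-2 * t)) ≤ u (x, t) - uo (x, t)) {s t : ℝ} (hs : 0 ≤ s)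
    (hst : s ≤ t) :
    u (x, t) ≤ u (x, s) + E / 2 * (Real.exp (-2 * s) - Real.exp (-2 * t)) := by
  suffices h : ∀ ε > 0, -(E / 2) * Real.exp (-2 * s) + ε * s - u (x, s) ≤
      -(E / 2) * Real.exp (-2 * t) + ε * t - u (x, t) by
    by_contra! hlt
    obtain ⟨ε, hε, hεt⟩ := exists_pos_mul_lt (sub_pos.2 hlt) (t - s)
    linarith [h ε hε]
  intro ε hε
  have hderiv (τ : ℝ) : HasDerivAt (fun τ => -(E / 2) * Real.exp (-2 * τ) + ε * τ)
      (E * Real.exp (-2 * τ) + ε) τ := by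
    refine ((((hasDerivAt_id' τ).const_mul (-2)).exp.const_mul (-(E / 2))).fun_add
      ((hasDerivAt_id' τ).const_mul ε)).congr_deriv ?_
    ring
  refine le_of_forall_not_isLocalMin (f := fun τ =>
    -(E / 2) * Real.exp (-2 * τ) + ε * τ - u (x, τ)) (by fun_prop) ?_ (fun τ hsτ hmin => ?_) hst
  · refine tendsto_atTop_mono' _ ?_ (tendsto_atTop_add_const_right _ (-|E / 2| - B)
      (tendsto_id.const_mul_atTop hε))
    filter_upwards [eventually_ge_atTop 0] with τ hτ
    have hexp : |E / 2 * Real.exp (-2 * τ)| ≤ |E / 2| := by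
      rw [abs_mul, Real.abs_exp]
      exact mul_le_of_le_one_right (abs_nonneg _) (Real.exp_le_one_iff.2 (by linarith))
    simp only [id]
    linarith [hB τ hτ, (abs_le.1 hexp).2]
  · have hτ : 0 < τ := hs.trans_lt hsτ
    have := hsub.deriv_le_of_isLocalMin_of_nonneg hH hu huo (by fun_prop) hτ hmin
    rw [(hderiv τ).deriv] at this
    linarith [hE τ hτ.le]

end MinusEstimate

section BarrierExistence

theorem tendsto_mul_exp_neg_mul (c : ℝ) {κ : ℝ} (hκ : 0 < κ) :
    Tendsto (fun s => c * Real.exp (-κ * s)) atTop (𝓝 0) := by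
  simpa using (Real.tendsto_exp_atBot.comp
    (tendsto_id.const_mul_atTop_of_neg (neg_lt_zero.2 hκ))).const_mul c

theorem plusBarrier_one_add_mul_exp {C E ψ κ s₀ : ℝ} (hC : 0 < C) (hE : 0 ≤ E) (hκ : 0 < κ)
    (hκ_two : κ ≤ 2) (hκψ : κ * C ≤ ψ / 2)
    (hs₀ : (2 + C) * E * Real.exp (-2 * s₀) ≤ ψ / 2 * C) :
    PlusBarrier C ψ s₀ (fun s => E * Real.exp (-2 * s))
      (fun s => 1 + C * Real.exp (-κ * (s - s₀))) := by
  have hderiv (s : ℝ) : deriv (fun s => 1 + C * Real.exp (-κ * (s - s₀))) s =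
      -κ * (C * Real.exp (-κ * (s - s₀))) := by
    refine HasDerivAt.deriv (((((((hasDerivAt_id' s).sub_const s₀).const_mul (-κ)).exp.const_mul
      C)).const_add 1).congr_deriv ?_)
    ring
  refine ⟨by fun_prop, fun s => ?_, fun s => ?_, by simp, fun s hs => ?_⟩
  · have : 0 < C * Real.exp (-κ * (s - s₀)) := by positivity
    linarith
  · rw [hderiv, neg_mul, neg_nonpos]
    positivity
  · have hψ : 0 ≤ ψ / 2 := (mul_pos hκ hC).le.trans hκψ
    have : 0 ≤ s - s₀ := sub_nonneg.2 hs
    have hexp_le_one : Real.exp (-κ * (s - s₀)) ≤ 1 := Real.exp_le_one_iff.2 (by nlinarith)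
    have hcoupling : (2 + C * Real.exp (-κ * (s - s₀))) * (E * Real.exp (-2 * s)) ≤
        ψ / 2 * (C * Real.exp (-κ * (s - s₀))) := calc
      _ ≤ (2 + C * 1) * (E * Real.exp (-2 * s)) := by gcongr
      _ = (2 + C) * E * Real.exp (-2 * s₀) * Real.exp (-2 * (s - s₀)) := by
        rw [mul_assoc _ (Real.exp _), ← Real.exp_add]
        ring_nf
      _ ≤ ψ / 2 * C * Real.exp (-κ * (s - s₀)) := by gcongr
      _ = _ := by ring
    have hdecrease : κ * C * (C * Real.exp (-κ * (s - s₀))) ≤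
        ψ / 2 * (C * Real.exp (-κ * (s - s₀))) := by gcongr
    rw [hderiv]
    linarith

theorem exists_plusBarrier_tendsto_one {C E ψ η : ℝ} (hC : 0 < C) (hE : 0 ≤ E) (hψ : 0 < ψ)
    (hη : 0 < η) :
    ∃ s₀ ≥ 0, ∃ G, PlusBarrier C ψ s₀ (fun s => E * Real.exp (-2 * s)) G ∧
      (∀ s, s₀ ≤ s → E * Real.exp (-2 * s) ≤ η) ∧ Tendsto G atTop (𝓝 1) := by
  obtain ⟨κ, hκ, hκ_two, hκψ⟩ : ∃ κ : ℝ, 0 < κ ∧ κ ≤ 2 ∧ κ * C ≤ ψ / 2 :=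
    ⟨min 2 (ψ / 2 / C), by positivity, min_le_left _ _, (le_div_iff₀ hC).1 (min_le_right _ _)⟩
  obtain ⟨s₀, hs₀, hs₀η, hs₀ψ⟩ := ((eventually_ge_atTop 0).and
    (((tendsto_mul_exp_neg_mul E two_pos).eventually (ge_mem_nhds hη)).and
      ((tendsto_mul_exp_neg_mul ((2 + C) * E) two_pos).eventually
        (ge_mem_nhds (by positivity : 0 < ψ / 2 * C))))).exists
  refine ⟨s₀, hs₀, _, plusBarrier_one_add_mul_exp hC hE hκ hκ_two hκψ hs₀ψ, fun s hs => ?_, ?_⟩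
  · exact le_trans (by gcongr E * Real.exp ?_; linarith) hs₀η
  · simpa [sub_eq_add_neg] using ((tendsto_mul_exp_neg_mul C hκ).comp
      (tendsto_atTop_add_const_right _ (-s₀) tendsto_id)).const_add 1

end BarrierExistence

section Ratios

variable {n : ℕ} {u : En n × ℝ → ℝ} {v : En n → ℝ} {η : ℝ} {G : ℝ → ℝ}

theorem tendsto_alphaPlus_of_sub_le_mul (hη : 0 ≤ η)
    (hpos : ∀ x t, 0 ≤ t → 0 < u (x, t) - v x) (hG : Tendsto G atTop (𝓝 1))
    (hle : ∀ᶠ s in atTop, ∀ x t, s ≤ t →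
      u (x, s) - v x ≤ G s * (u (x, t) - v x + η * (t - s))) :
    Tendsto (alphaPlus u v η) atTop (𝓝 1) := by
  have hGinv : Tendsto (fun s => (G s)⁻¹) atTop (𝓝 1) := by simpa using hG.inv₀ one_ne_zero
  refine tendsto_of_tendsto_of_tendsto_of_le_of_le' hGinv tendsto_const_nhds ?_ ?_
  · filter_upwards [hle, eventually_ge_atTop 0, hG.eventually (lt_mem_nhds one_pos)]
      with s hs hs₀ hGs
    refine le_csInf ⟨_, 0, s, le_rfl, rfl⟩ ?_
    rintro _ ⟨x, t, hst, rfl⟩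
    rw [le_div_iff₀ (hpos x s hs₀), inv_mul_le_iff₀ hGs]
    exact hs x t hst
  · filter_upwards [eventually_ge_atTop 0] with s hs₀
    refine csInf_le ⟨0, ?_⟩ ⟨0, s, le_rfl, by simp [(hpos 0 s hs₀).ne']⟩
    rintro _ ⟨x, t, hst, rfl⟩
    exact div_nonneg (add_nonneg (hpos x t (hs₀.trans hst)).le
      (mul_nonneg hη (sub_nonneg.2 hst))) (hpos x s hs₀).le

theorem tendsto_alphaMinus_of_sub_le_mul (hpos : ∀ x t, 0 ≤ t → 0 < u (x, t) - v x)
    (hG : Tendsto G atTop (𝓝 1))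
    (hle : ∀ᶠ s in atTop, ∀ x t, s ≤ t →
      u (x, t) - v x - η * (t - s) ≤ G s * (u (x, s) - v x)) :
    Tendsto (alphaMinus u v η) atTop (𝓝 1) := by
  have hbound : ∀ᶠ s in atTop, G s ∈ upperBounds {r : ℝ | ∃ (x : En n) (t : ℝ), s ≤ t ∧
      r = (u (x, t) - v x - η * (t - s)) / (u (x, s) - v x)} := by
    filter_upwards [hle, eventually_ge_atTop 0] with s hs hs₀
    rintro _ ⟨x, t, hst, rfl⟩
    exact (div_le_iff₀ (hpos x s hs₀)).2 (hs x t hst)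
  refine tendsto_of_tendsto_of_tendsto_of_le_of_le' tendsto_const_nhds hG ?_ ?_
  · filter_upwards [hbound, eventually_ge_atTop 0] with s hs hs₀
    exact le_csSup ⟨_, hs⟩ ⟨0, s, le_rfl, by simp [(hpos 0 s hs₀).ne']⟩
  · filter_upwards [hbound] with s hs
    exact csSup_le ⟨_, 0, s, le_rfl, rfl⟩ hs

end Ratios

section TimeExtension

variable {n : ℕ} {H : En n → En n → ℝ} {u uo : En n × ℝ → ℝ}

/-- The extension of `u` to negative times by its values at time `0`, used to trade continuity on
`{t ≥ 0}` for continuity everywhere; values of `u` at negative times are discarded. -/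
def timeExtend (u : En n × ℝ → ℝ) (q : En n × ℝ) : ℝ := u (q.1, max q.2 0)

theorem timeExtend_of_nonneg (u : En n × ℝ → ℝ) (x : En n) {t : ℝ} (ht : 0 ≤ t) :
    timeExtend u (x, t) = u (x, t) := by
  simp [timeExtend, ht]

theorem continuous_timeExtend (hu : ContinuousOn u {q : En n × ℝ | 0 ≤ q.2}) :
    Continuous (timeExtend u) :=
  hu.comp_continuous (f := fun q : En n × ℝ => (q.1, max q.2 0)) (by fun_prop) (by simp)

theorem ZPeriodicST.timeExtend (hu : ZPeriodicST u) : ZPeriodicST (timeExtend u) :=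
  fun x k _ => hu x k _

theorem timeExtend_eventuallyEq (u : En n × ℝ → ℝ) (x : En n) {t : ℝ} (ht : 0 < t) :
    timeExtend u =ᶠ[𝓝 (x, t)] u := by
  filter_upwards [continuous_snd.continuousAt.eventually (lt_mem_nhds ht)] with q hq
  exact timeExtend_of_nonneg u q.1 hq.le

theorem EvolSubIneq.timeExtend (hu : EvolSubIneq H u uo) :
    EvolSubIneq H (timeExtend u) (timeExtend uo) := by
  intro φ hφ x t ht hmax
  rw [timeExtend_of_nonneg u x ht.le, timeExtend_of_nonneg uo x ht.le]
  exact hu φ hφ x t ht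
    (((timeExtend_eventuallyEq u x ht).sub EventuallyEq.rfl).isLocalMax_iff.1 hmax)

theorem EvolSuperIneq.timeExtend (hu : EvolSuperIneq H u uo) :
    EvolSuperIneq H (timeExtend u) (timeExtend uo) := by
  intro φ hφ x t ht hmin
  rw [timeExtend_of_nonneg u x ht.le, timeExtend_of_nonneg uo x ht.le]
  exact hu φ hφ x t ht
    (((timeExtend_eventuallyEq u x ht).sub EventuallyEq.rfl).isLocalMin_iff.1 hmin)

end TimeExtension

section Convergence

variable {n : ℕ} {H : En n → En n → ℝ} {v : En n → ℝ} {u uo : En n × ℝ → ℝ} {C E η : ℝ}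

theorem abs_sub_le_mul_exp_neg_two_mul (hH : Continuous fun q : En n × En n => H q.1 q.2)
    (hHcoer : Coercive H) (hu : ContinuousOn u {q : En n × ℝ | 0 ≤ q.2})
    (huo : ContinuousOn uo {q : En n × ℝ | 0 ≤ q.2}) (huper : ZPeriodicST u)
    (huoper : ZPeriodicST uo) (hsub : SysSub H H u uo) (hsuper : SysSuper H H u uo)
    (hE : ∀ x t, 0 ≤ t → |u (x, t) - uo (x, t)| ≤ E) (x : En n) {t : ℝ} (ht : 0 ≤ t) :
    |u (x, t) - uo (x, t)| ≤ E * Real.exp (-2 * t) := by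
  have hE' (x : En n) (t : ℝ) : |timeExtend u (x, t) - timeExtend uo (x, t)| ≤ E :=
    hE x _ (le_max_right t 0)
  have hu' := continuous_timeExtend hu
  have huo' := continuous_timeExtend huo
  rw [← timeExtend_of_nonneg u x ht, ← timeExtend_of_nonneg uo x ht]
  refine abs_sub_le_iff.2 ⟨?_, ?_⟩
  · exact sub_le_mul_exp_neg_two_mul hH hHcoer hu' huo' huper.timeExtend huoper.timeExtend
      hsub.1.timeExtend hsuper.2.timeExtend (fun x t _ => (abs_sub_le_iff.1 (hE' x t)).1) x ht
  · exact sub_le_mul_exp_neg_two_mul hH hHcoer huo' hu' huoper.timeExtend huper.timeExtend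
      hsub.2.timeExtend hsuper.1.timeExtend (fun x t _ => (abs_sub_le_iff.1 (hE' x t)).2) x ht

theorem tendsto_alphaPlus_of_A8plusAt (hH : Continuous fun q : En n × En n => H q.1 q.2)
    (hHcoer : Coercive H) (hv : Continuous v) (hvper : ZPeriodic v) (hvsub : SingleSub H v 0)
    (hu : ContinuousOn u {q : En n × ℝ | 0 ≤ q.2})
    (huo : ContinuousOn uo {q : En n × ℝ | 0 ≤ q.2}) (huper : ZPeriodicST u)
    (husub : EvolSubIneq H u uo) (husuper : EvolSuperIneq H u uo)
    (hnorm : ∀ x t, 0 ≤ t → 1 ≤ u (x, t) - v x ∧ u (x, t) - v x ≤ C)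
    (hclose : ∀ x t, 0 ≤ t → |u (x, t) - uo (x, t)| ≤ E * Real.exp (-2 * t)) (hη : 0 < η)
    {ψ : ℝ} (hψ : 0 < ψ) (hA : A8plusAt H (η / 2) ψ) :
    Tendsto (alphaPlus u v η) atTop (𝓝 1) := by
  have hC : 0 < C := by linarith [hnorm 0 0 le_rfl]
  have hE : 0 ≤ E := by simpa using (abs_nonneg _).trans (hclose 0 0 le_rfl)
  obtain ⟨s₀, hs₀, G, hG, hδ, hG_lim⟩ := exists_plusBarrier_tendsto_one hC hE hψ (half_pos hη)
  refine tendsto_alphaPlus_of_sub_le_mul hη.le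
    (fun x t ht => one_pos.trans_le (hnorm x t ht).1) hG_lim ?_
  filter_upwards [eventually_ge_atTop s₀] with s hs x t hst
  have hbarrier := hG.sub_le_mul hs₀ hη hA hH hHcoer hv hvper hvsub (continuous_timeExtend hu)
    (continuous_timeExtend huo) huper.timeExtend husub.timeExtend husuper.timeExtend
    (fun x t _ => hnorm x _ (le_max_right t 0)) hδ
    (fun x s t hs hst => by
      have ht : 0 ≤ t := (hs₀.trans hs).trans hst
      rw [timeExtend_of_nonneg u x ht, timeExtend_of_nonneg uo x ht]
      exact (hclose x t ht).trans (by gcongr E * Real.exp ?_; linarith)) x hs hst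
  rwa [timeExtend_of_nonneg u x (hs₀.trans hs),
    timeExtend_of_nonneg u x ((hs₀.trans hs).trans hst)] at hbarrier

theorem tendsto_alphaMinus_of_nonneg (hH : ∀ x p, 0 ≤ H x p)
    (hu : ContinuousOn u {q : En n × ℝ | 0 ≤ q.2})
    (huo : ContinuousOn uo {q : En n × ℝ | 0 ≤ q.2}) (husub : EvolSubIneq H u uo)
    (hnorm : ∀ x t, 0 ≤ t → 1 ≤ u (x, t) - v x ∧ u (x, t) - v x ≤ C)
    (hclose : ∀ x t, 0 ≤ t → |u (x, t) - uo (x, t)| ≤ E * Real.exp (-2 * t)) (hη : 0 ≤ η) :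
    Tendsto (alphaMinus u v η) atTop (𝓝 1) := by
  have hE : 0 ≤ E := by simpa using (abs_nonneg _).trans (hclose 0 0 le_rfl)
  have hG_lim : Tendsto (fun s => 1 + E / 2 * Real.exp (-2 * s)) atTop (𝓝 1) := by
    simpa using (tendsto_mul_exp_neg_mul (E / 2) two_pos).const_add 1
  refine tendsto_alphaMinus_of_sub_le_mul
    (fun x t ht => one_pos.trans_le (hnorm x t ht).1) hG_lim ?_
  filter_upwards [eventually_ge_atTop 0] with s hs x t hst
  have hmono := husub.timeExtend.le_add_of_nonneg hH (continuous_timeExtend hu)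
    (continuous_timeExtend huo) (x := x) (B := v x + C) (E := E)
    (fun τ _ => sub_le_iff_le_add'.1 (hnorm x _ (le_max_right τ 0)).2)
    (fun τ hτ => by
      rw [timeExtend_of_nonneg u x hτ, timeExtend_of_nonneg uo x hτ]
      exact (abs_le.1 (hclose x τ hτ)).1) hs hst
  rw [timeExtend_of_nonneg u x hs, timeExtend_of_nonneg u x (hs.trans hst)] at hmono
  have hηts : 0 ≤ η * (t - s) := mul_nonneg hη (sub_nonneg.2 hst)
  have hδs : 0 ≤ E / 2 * Real.exp (-2 * s) := by positivity
  have hδt : 0 ≤ E / 2 * Real.exp (-2 * t) := by positivity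
  have hscale : E / 2 * Real.exp (-2 * s) ≤ E / 2 * Real.exp (-2 * s) * (u (x, s) - v x) :=
    le_mul_of_one_le_right hδs (hnorm x s hs).1
  linarith

end Convergence

theorem stmt16_general {n : ℕ} (hn : 1 ≤ n) {H : En n → En n → ℝ}
    (hH : Continuous fun q : En n × En n => H q.1 q.2) (hHcoer : Coercive H) {v : En n → ℝ}
    (hv : Continuous v) (hvper : ZPeriodic v) (hvsub : SingleSub H v 0) {u₁ u₂ : En n × ℝ → ℝ}
    (hu₁ : ContinuousOn u₁ {q : En n × ℝ | 0 ≤ q.2})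
    (hu₂ : ContinuousOn u₂ {q : En n × ℝ | 0 ≤ q.2}) (hu₁per : ZPeriodicST u₁)
    (hu₂per : ZPeriodicST u₂) (hsub : SysSub H H u₁ u₂) (hsuper : SysSuper H H u₁ u₂) {C : ℝ}
    (hnorm : ∀ (x : En n) (t : ℝ), 0 ≤ t →
      (1 ≤ u₁ (x, t) - v x ∧ u₁ (x, t) - v x ≤ C) ∧
      (1 ≤ u₂ (x, t) - v x ∧ u₂ (x, t) - v x ≤ C)) (η₀ : ℝ) :
    (A8plus H η₀ → ∀ η : ℝ, 0 < η → η ≤ η₀ →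
      Tendsto (alphaPlus u₁ v η) atTop (𝓝 1) ∧ Tendsto (alphaPlus u₂ v η) atTop (𝓝 1)) ∧
    (A8minus H η₀ → ∀ η : ℝ, 0 < η → η ≤ η₀ →
      Tendsto (alphaMinus u₁ v η) atTop (𝓝 1) ∧ Tendsto (alphaMinus u₂ v η) atTop (𝓝 1)) := by
  have hnorm₁ := fun x t ht => (hnorm x t ht).1
  have hnorm₂ := fun x t ht => (hnorm x t ht).2
  have hclose₁ := fun x t (ht : 0 ≤ t) => abs_sub_le_mul_exp_neg_two_mul hH hHcoer hu₁ hu₂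
    hu₁per hu₂per hsub hsuper (E := C) (fun x t ht => abs_sub_le_iff.2
      ⟨by linarith [hnorm x t ht], by linarith [hnorm x t ht]⟩) x ht
  have hclose₂ := fun x t ht => abs_sub_comm (u₁ (x, t)) _ ▸ hclose₁ x t ht
  refine ⟨fun hA η hη hη₀ => ?_, fun hA η hη hη₀ => ?_⟩
  · obtain ⟨ψ, hψ, hAψ⟩ := hA (η / 2) (half_pos hη) ((half_le_self hη.le).trans hη₀)
    exact ⟨tendsto_alphaPlus_of_A8plusAt hH hHcoer hv hvper hvsub hu₁ hu₂ hu₁per hsub.1 hsuper.1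
        hnorm₁ hclose₁ hη hψ hAψ,
      tendsto_alphaPlus_of_A8plusAt hH hHcoer hv hvper hvsub hu₂ hu₁ hu₂per hsub.2 hsuper.2
        hnorm₂ hclose₂ hη hψ hAψ⟩
  · have hH₀ := hA.nonneg hn hH hHcoer (hη.trans_le hη₀)
    exact ⟨tendsto_alphaMinus_of_nonneg hH₀ hu₁ hu₂ hsub.1 hnorm₁ hclose₁ hη.le,
      tendsto_alphaMinus_of_nonneg hH₀ hu₂ hu₁ hsub.2 hnorm₂ hclose₂ hη.le⟩

/-- Lemma 5.4: `α_η^± (s), β_η^± (s) → 1` as `s → ∞`. -/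
theorem stmt16 (n : ℕ) (hn : 1 ≤ n) (H : En n → En n → ℝ)
    (hHcont : Continuous fun q : En n × En n => H q.1 q.2)
    (hHper : ZPeriodicH H) (hHcoer : Coercive H)
    (v : En n → ℝ) (hvlip : IsLip v) (hvper : ZPeriodic v)
    (hverg : SingleSolution H v 0)
    (u₀₁ u₀₂ : En n → ℝ) (hu₀₁ : IsLip u₀₁) (hu₀₂ : IsLip u₀₂)
    (hu₀₁per : ZPeriodic u₀₁) (hu₀₂per : ZPeriodic u₀₂)
    (u₁ u₂ : En n × ℝ → ℝ) (hu₁per : ZPeriodicST u₁) (hu₂per : ZPeriodicST u₂)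
    (hsol : SysSolution H H u₀₁ u₀₂ u₁ u₂)
    (C : ℝ)
    (hnorm : ∀ (x : En n) (t : ℝ), 0 ≤ t →
      (1 ≤ u₁ (x, t) - v x ∧ u₁ (x, t) - v x ≤ C) ∧
      (1 ≤ u₂ (x, t) - v x ∧ u₂ (x, t) - v x ≤ C))
    (η₀ : ℝ) (hη₀ : 0 < η₀) :
    (A8plus H η₀ → ∀ η : ℝ, 0 < η → η ≤ η₀ →
      Tendsto (alphaPlus u₁ v η) atTop (nhds 1) ∧
      Tendsto (alphaPlus u₂ v η) atTop (nhds 1)) ∧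
    (A8minus H η₀ → ∀ η : ℝ, 0 < η → η ≤ η₀ →
      Tendsto (alphaMinus u₁ v η) atTop (nhds 1) ∧
      Tendsto (alphaMinus u₂ v η) atTop (nhds 1)) := by
  exact stmt16_general hn hHcont hHcoer hverg.1 hvper hverg.2.1 hsol.1 hsol.2.1 hu₁per hu₂per
    hsol.2.2.1 hsol.2.2.2.1 hnorm η₀
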